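/- arXiv:2411.02978 — 2 statements merged into one kernel-verified Lean document; each statement's English description precedes it below -/
import Mathlib

section
/- For every nonnegative integer n, b'₅(100n+31) ≡ 0 (mod 4). -/
/-- `b5' n` is the number of partitions of `n` into distinct parts,
none of which is divisible by `5` (with `b5' 0 = 1`). -/
def b5' (n : ℕ) : ℕ :=
  ((Nat.Partition.distincts n).filter (fun p => ∀ i ∈ p.parts, ¬ (5 ∣ i))).card

/-!
Let `G = ∑ b5'(n) q ^ n`; by Euler, `G = (q⁵; q¹⁰) / (q; q²)`. By the Jacobi triple product
`T = f(q⁹, q) f(q⁷, q³)` equals `(-q; q²) (q¹⁰; q¹⁰)² / (-q⁵; q¹⁰)`, so `G` is `T` times a power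
series in `q²`. Ramanujan's formula for a product of two theta functions shows that the odd part of
`T` is `q T(q²)`; hence `H = ∑ b5'(2 n + 1) q ^ n` satisfies
`H f(-q², -q²) = f(q, q) (-q¹⁰; q¹⁰)`.

Modulo `4` the series `f(-q², -q²)` is its own inverse, `f(q, q) = 1 + 2 ∑ q ^ (k²)` and
`2 (-q¹⁰; q¹⁰) = 2 (q¹⁰; q¹⁰)`, so up to even powers of `q` the series `H` is
`2 ∑ q ^ (k²) (q¹⁰; q¹⁰)`. If `50 n + 15 = k² + 10 p`, then `p ≡ 4 (mod 5)`, and no pentagonal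
number has this residue.
-/

open PowerSeries Finset Filter Topology
open scoped PowerSeries.WithPiTopology

namespace QSeries

section GaussBinom

variable {R : Type*} [CommRing R] (q : R)

/-- The Gaussian binomial coefficient `[n, k]_q`, evaluated at an element `q` of a ring. The second
Pascal rule serves as its definition, so that no division by `1 - q ^ i` occurs. -/
def gaussBinom : ℕ → ℕ → R
  | _, 0 => 1
  | 0, _ + 1 => 0
  | n + 1, k + 1 => gaussBinom n (k + 1) + q ^ (n - k) * gaussBinom n k

/-- The finite product `(q; q)_n = (1 - q)(1 - q ^ 2) ⋯ (1 - q ^ n)`. -/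
def qFactorial (n : ℕ) : R :=
  ∏ i ∈ range n, (1 - q ^ (i + 1))

@[simp] lemma gaussBinom_zero_right (n : ℕ) : gaussBinom q n 0 = 1 := by
  cases n <;> rw [gaussBinom]

lemma gaussBinom_succ_succ (n k : ℕ) :
    gaussBinom q (n + 1) (k + 1) = gaussBinom q n (k + 1) + q ^ (n - k) * gaussBinom q n k := by
  rw [gaussBinom]

lemma gaussBinom_eq_zero_of_lt {n k : ℕ} (h : n < k) : gaussBinom q n k = 0 := by
  induction n generalizing k with
  | zero => obtain ⟨k, rfl⟩ := Nat.exists_eq_add_one.2 h; rw [gaussBinom]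
  | succ n ih =>
    obtain ⟨k, rfl⟩ := Nat.exists_eq_add_one.2 (n.succ_pos.trans h)
    rw [gaussBinom_succ_succ, ih (by lia), ih (by lia), mul_zero, add_zero]

@[simp] lemma gaussBinom_self (n : ℕ) : gaussBinom q n n = 1 := by
  induction n with
  | zero => exact gaussBinom_zero_right q 0
  | succ n ih => simp [gaussBinom_succ_succ, ih, gaussBinom_eq_zero_of_lt]

@[simp] lemma qFactorial_zero : qFactorial q 0 = 1 := prod_range_zero _

lemma qFactorial_succ (n : ℕ) : qFactorial q (n + 1) = qFactorial q n * (1 - q ^ (n + 1)) :=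
  prod_range_succ _ n

lemma gaussBinom_mul_qFactorial_mul_qFactorial (k l : ℕ) :
    gaussBinom q (k + l) k * (qFactorial q k * qFactorial q l) = qFactorial q (k + l) := by
  induction hn : k + l generalizing k l with
  | zero =>
    obtain ⟨rfl, rfl⟩ : k = 0 ∧ l = 0 := by lia
    simp
  | succ n ih =>
    rcases k with _ | k
    · simp [show l = n + 1 by lia]
    rcases l with _ | l
    · simp [show k = n by lia]
    have hl : n - k = l + 1 := by lia
    have hpow : q ^ (n + 1) = q ^ (k + 1) * q ^ (l + 1) := by rw [← pow_add]; congr 1; lia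
    have ih₁ := ih (k + 1) l (by lia)
    have ih₂ := ih k (l + 1) (by lia)
    rw [gaussBinom_succ_succ, hl, qFactorial_succ q n, hpow]
    rw [qFactorial_succ q k] at ih₁ ⊢
    rw [qFactorial_succ q l] at ih₂ ⊢
    linear_combination (1 - q ^ (l + 1)) * ih₁ + q ^ (l + 1) * (1 - q ^ (k + 1)) * ih₂

theorem prod_add_mul_pow_eq_sum_gaussBinom (x y : R) (n : ℕ) :
    ∏ i ∈ range n, (y + x * q ^ i) =
      ∑ k ∈ range (n + 1), q ^ k.choose 2 * gaussBinom q n k * x ^ k * y ^ (n - k) := by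
  induction n with
  | zero => simp
  | succ n ih =>
    have pascal : ∀ k ∈ range (n + 1),
        q ^ (k + 1).choose 2 * gaussBinom q (n + 1) (k + 1) * x ^ (k + 1) * y ^ (n - k) =
          q ^ (k + 1).choose 2 * gaussBinom q n (k + 1) * x ^ (k + 1) * y ^ (n - k) +
          q ^ k.choose 2 * gaussBinom q n k * x ^ k * y ^ (n - k) * (x * q ^ n) := by
      intro k hk
      have hchoose : (k + 1).choose 2 = k + k.choose 2 := by simp [Nat.choose_succ_succ' k 1]
      have hpow : q ^ n = q ^ k * q ^ (n - k) := by
        rw [← pow_add, Nat.add_sub_of_le (mem_range_succ_iff.1 hk)]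
      rw [gaussBinom_succ_succ, hchoose, hpow]
      ring
    have absorb : ∀ k ∈ range n,
        q ^ (k + 1).choose 2 * gaussBinom q n (k + 1) * x ^ (k + 1) * y ^ (n - k) =
          q ^ (k + 1).choose 2 * gaussBinom q n (k + 1) * x ^ (k + 1) * y ^ (n - (k + 1)) * y := by
      intro k hk
      rw [show n - k = n - (k + 1) + 1 by have := mem_range.1 hk; lia, pow_succ]
      ring
    rw [prod_range_succ, ih, sum_range_succ' _ (n + 1)]
    simp only [Nat.add_sub_add_right]
    rw [sum_congr rfl pascal, sum_add_distrib, ← sum_mul, sum_range_succ (fun k ↦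
      q ^ (k + 1).choose 2 * gaussBinom q n (k + 1) * x ^ (k + 1) * y ^ (n - k)),
      sum_congr rfl absorb, ← sum_mul, gaussBinom_eq_zero_of_lt q n.lt_succ_self,
      sum_range_succ' _ n]
    simp only [Nat.choose_zero_succ, gaussBinom_zero_right, Nat.sub_zero]
    ring

lemma pow_dvd_qFactorial_sub_qFactorial {d m n : ℕ} (hm : d ≤ m) (hn : d ≤ n) :
    q ^ (d + 1) ∣ qFactorial q m - qFactorial q n := by
  have stable : ∀ k, d ≤ k → q ^ (d + 1) ∣ qFactorial q k - qFactorial q d := by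
    intro k hk
    induction k, hk using Nat.le_induction with
    | base => simp
    | succ k hk ih =>
      have step : q ^ (d + 1) ∣ qFactorial q k * q ^ (k + 1) :=
        (pow_dvd_pow q (by lia)).mul_left _
      convert ih.sub step using 1
      rw [qFactorial_succ]
      ring
  simpa using (stable m hm).sub (stable n hn)

lemma pow_dvd_gaussBinom_mul_qFactorial_sub_one {d k l n : ℕ} (hk : d ≤ k) (hl : d ≤ l)
    (hn : d ≤ n) (hunit : IsUnit (qFactorial q n)) :
    q ^ (d + 1) ∣ gaussBinom q (k + l) k * qFactorial q n - 1 := by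
  obtain ⟨a, ha⟩ := pow_dvd_qFactorial_sub_qFactorial q hk hn
  obtain ⟨b, hb⟩ := pow_dvd_qFactorial_sub_qFactorial q hl hn
  obtain ⟨c, hc⟩ := pow_dvd_qFactorial_sub_qFactorial q (hk.trans (Nat.le_add_right k l)) hn
  rw [← hunit.dvd_mul_right]
  refine ⟨c - gaussBinom q (k + l) k * (a * qFactorial q l + qFactorial q n * b), ?_⟩
  linear_combination gaussBinom_mul_qFactorial_mul_qFactorial q k l + hc -
    gaussBinom q (k + l) k * (qFactorial q l * ha + qFactorial q n * hb)

end GaussBinom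

section FiniteTripleProduct

/-- The exponent `s m(m+1)/2 + t m(m-1)/2` of the `m`-th term of Ramanujan's theta function
`f(q ^ s, q ^ t)`. -/
def thetaExp (s t : ℕ) (m : ℤ) : ℕ :=
  ((s : ℤ) * (m * (m + 1) / 2) + t * (m * (m - 1) / 2)).toNat

lemma two_mul_thetaExp (s t : ℕ) (m : ℤ) :
    2 * (thetaExp s t m : ℤ) = s * (m * (m + 1)) + t * (m * (m - 1)) := by
  have hs : 2 * (m * (m + 1) / 2) = m * (m + 1) :=
    Int.mul_ediv_cancel' (Int.even_mul_succ_self m).two_dvd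
  have ht : 2 * (m * (m - 1) / 2) = m * (m - 1) :=
    Int.mul_ediv_cancel' (Int.even_mul_pred_self m).two_dvd
  have hs' : 0 ≤ m * (m + 1) / 2 := by have := Int.le_self_sq m; have := Int.le_self_sq (-m); lia
  have ht' : 0 ≤ m * (m - 1) / 2 := by have := Int.le_self_sq m; lia
  rw [thetaExp, Int.toNat_of_nonneg (by positivity)]
  linear_combination (s : ℤ) * hs + t * ht

lemma thetaExp_mul (k s t : ℕ) (m : ℤ) : thetaExp (k * s) (k * t) m = k * thetaExp s t m := by
  have h := two_mul_thetaExp (k * s) (k * t) m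
  have h' := two_mul_thetaExp s t m
  zify
  push_cast at h
  refine mul_left_cancel₀ two_ne_zero ?_
  linear_combination h - k * h'

lemma natAbs_le_thetaExp_add_one {s t : ℕ} (hst : 0 < s + t) (m : ℤ) :
    m.natAbs ≤ thetaExp s t m + 1 := by
  have hpos : 0 ≤ |m| * (|m| - 1) := by
    rcases (abs_nonneg m).eq_or_lt with h | h
    · simp [← h]
    · exact mul_nonneg h.le (by lia)
  have hs : |m| * (|m| - 1) ≤ m * (m + 1) := by nlinarith [abs_mul_abs_self m, neg_abs_le m]
  have ht : |m| * (|m| - 1) ≤ m * (m - 1) := by nlinarith [abs_mul_abs_self m, le_abs_self m]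
  have hst' : (1 : ℤ) ≤ s + t := by exact_mod_cast hst
  have hquad : |m| * (|m| - 1) ≤ 2 * thetaExp s t m := calc
    _ ≤ (s + t : ℤ) * (|m| * (|m| - 1)) := le_mul_of_one_le_left hpos hst'
    _ = s * (|m| * (|m| - 1)) + t * (|m| * (|m| - 1)) := add_mul ..
    _ ≤ s * (m * (m + 1)) + t * (m * (m - 1)) := by gcongr
    _ = 2 * thetaExp s t m := (two_mul_thetaExp s t m).symm
  zify
  nlinarith [Int.le_self_sq (|m| - 1)]

variable {R : Type*} [CommRing R]

/-- The `m`-th term `u ^ m q ^ (s m(m+1)/2 + t m(m-1)/2)` of Ramanujan's theta function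
`f(u q ^ s, u⁻¹ q ^ t)`. -/
noncomputable def thetaTerm (u : Rˣ) (s t : ℕ) (m : ℤ) : R⟦X⟧ :=
  monomial (thetaExp s t m) ↑(u ^ m)

lemma monomial_mul_left_cancel {n : ℕ} {a : R} (ha : IsUnit a) {f g : R⟦X⟧}
    (h : monomial n a * f = monomial n a * g) : f = g := by
  simp only [monomial_eq_C_mul_X_pow, mul_assoc] at h
  exact X_pow_mul_cancel ((ha.map C).mul_left_cancel h)

lemma two_mul_choose_two (k : ℕ) : 2 * (k.choose 2 : ℤ) = k * (k - 1) := by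
  induction k with
  | zero => simp
  | succ k ih =>
    push_cast [Nat.choose_succ_succ' k 1, Nat.choose_one_right]
    linear_combination ih

lemma prod_range_X_pow_add_monomial_mul_X_pow_add (c : R) (s k n : ℕ) :
    ∏ i ∈ range n, ((X ^ k) ^ n + monomial s c * (X ^ k) ^ (n + i)) =
      monomial (k * (n * n)) 1 * ∏ i ∈ range n, (1 + monomial (s + k * i) c) := by
  have hconst : monomial (k * (n * n)) (1 : R) = ∏ _i ∈ range n, (X ^ k) ^ n := by
    rw [prod_const, card_range, ← pow_mul, ← pow_mul, X_pow_eq]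
  rw [hconst, ← prod_mul_distrib]
  refine prod_congr rfl fun i _ ↦ ?_
  simp only [monomial_eq_C_mul_X_pow]
  ring

lemma prod_range_X_pow_add_monomial_mul_X_pow (u : Rˣ) (s t n : ℕ) :
    ∏ i ∈ range n, ((X ^ (s + t)) ^ n + monomial s (u : R) * (X ^ (s + t)) ^ i) =
      monomial ((s + t) * n.choose 2 + s * n) ((u : R) ^ n) *
        ∏ i ∈ range n, (1 + monomial (t + (s + t) * i) (↑u⁻¹ : R)) := by
  have hconst : monomial ((s + t) * n.choose 2 + s * n) ((u : R) ^ n) =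
      ∏ i ∈ range n, monomial s (u : R) * (X ^ (s + t)) ^ i := by
    rw [prod_mul_distrib, prod_const, card_range, prod_pow_eq_pow_sum, sum_range_id,
      ← Nat.choose_two_right, monomial_pow, ← pow_mul, X_pow_eq, monomial_mul_monomial,
      mul_one, add_comm, mul_comm n s]
  rw [hconst, ← prod_range_reflect (fun i ↦ 1 + monomial (t + (s + t) * i) (↑u⁻¹ : R)),
    ← prod_mul_distrib]
  refine prod_congr rfl fun i hi ↦ ?_
  obtain ⟨j, rfl⟩ := Nat.exists_eq_add_of_lt (mem_range.1 hi)
  rw [show i + j + 1 - 1 - i = j by lia, mul_add, mul_one, ← pow_mul, ← pow_mul, X_pow_eq,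
    X_pow_eq, monomial_mul_monomial, monomial_mul_monomial, mul_one, Units.mul_inv, add_comm]
  congr 3
  ring

lemma prod_range_two_mul_X_pow_add_monomial (u : Rˣ) (s t n : ℕ) :
    ∏ i ∈ range (2 * n), ((X ^ (s + t)) ^ n + monomial s (u : R) * (X ^ (s + t)) ^ i) =
      monomial ((s + t) * (n.choose 2 + n * n) + s * n) ((u : R) ^ n) *
        ((∏ i ∈ range n, (1 + monomial (s + (s + t) * i) (u : R))) *
          ∏ i ∈ range n, (1 + monomial (t + (s + t) * i) (↑u⁻¹ : R))) := by
  rw [two_mul, prod_range_add, prod_range_X_pow_add_monomial_mul_X_pow,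
    prod_range_X_pow_add_monomial_mul_X_pow_add, mul_mul_mul_comm, mul_comm (∏ i ∈ _, _),
    monomial_mul_monomial, mul_one]
  congr 3
  ring

theorem prod_one_add_monomial_mul_prod_eq_sum_thetaTerm (u : Rˣ) (s t n : ℕ) :
    (∏ i ∈ range n, (1 + monomial (s + (s + t) * i) (u : R))) *
        ∏ i ∈ range n, (1 + monomial (t + (s + t) * i) (↑u⁻¹ : R)) =
      ∑ k ∈ range (2 * n + 1), gaussBinom (X ^ (s + t)) (2 * n) k * thetaTerm u s t (k - n) := by
  refine monomial_mul_left_cancel (n := (s + t) * (n.choose 2 + n * n) + s * n)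
    (u.isUnit.pow n) ?_
  rw [← prod_range_two_mul_X_pow_add_monomial, prod_add_mul_pow_eq_sum_gaussBinom, mul_sum]
  refine sum_congr rfl fun k hk ↦ ?_
  have hexp : (s + t) * k.choose 2 + k * s + (s + t) * n * (2 * n - k) =
      (s + t) * (n.choose 2 + n * n) + s * n + thetaExp s t (k - n) := by
    zify [mem_range_succ_iff.1 hk]
    refine mul_left_cancel₀ two_ne_zero ?_
    linear_combination (s + t : ℤ) * (two_mul_choose_two k - two_mul_choose_two n) -
      two_mul_thetaExp s t (k - n)
  have hunit : (u : R) ^ k = u ^ n * ↑(u ^ ((k : ℤ) - n)) := by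
    rw [← Units.val_pow_eq_pow_val, ← Units.val_pow_eq_pow_val, ← Units.val_mul,
      ← zpow_natCast, ← zpow_natCast, ← zpow_add, add_sub_cancel]
  rw [thetaTerm, mul_left_comm, monomial_mul_monomial, ← hunit, ← hexp, monomial_pow]
  simp only [monomial_eq_C_mul_X_pow, ← pow_mul]
  ring

end FiniteTripleProduct

section TripleProductApprox

variable {R : Type*} [CommRing R]

lemma isUnit_qFactorial_X_pow {m : ℕ} (hm : 0 < m) (n : ℕ) :
    IsUnit (qFactorial (X ^ m : R⟦X⟧) n) := by
  rw [isUnit_iff_constantCoeff, qFactorial, map_prod]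
  simp [hm.ne']

lemma sum_Icc_neg_eq_sum_range {M : Type*} [AddCommMonoid M] (f : ℤ → M) (n : ℕ) :
    ∑ m ∈ Icc (-n : ℤ) n, f m = ∑ k ∈ range (2 * n + 1), f (k - n) := by
  refine (sum_nbij (fun k : ℕ ↦ (k - n : ℤ)) ?_ ?_ ?_ fun _ _ ↦ rfl).symm
  · intro k hk
    simp only [mem_range, mem_Icc] at *
    lia
  · exact fun a _ b _ hab ↦ by simpa using hab
  · intro m hm
    simp only [coe_Icc, Set.mem_Icc] at hm
    exact ⟨(m + n).toNat, by simp only [coe_range, Set.mem_Iio]; lia, by lia⟩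

lemma X_pow_dvd_prod_mul_qFactorial_sub_sum_thetaTerm (u : Rˣ) {s t d n : ℕ} (hst : 0 < s + t)
    (hn : 2 * d + 1 ≤ n) :
    X ^ (d + 1) ∣ (∏ i ∈ range n, (1 + monomial (s + (s + t) * i) (u : R))) *
        (∏ i ∈ range n, (1 + monomial (t + (s + t) * i) (↑u⁻¹ : R))) *
        qFactorial (X ^ (s + t)) n - ∑ m ∈ Icc (-n : ℤ) n, thetaTerm u s t m := by
  rw [prod_one_add_monomial_mul_prod_eq_sum_thetaTerm, sum_Icc_neg_eq_sum_range, sum_mul,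
    ← sum_sub_distrib]
  refine dvd_sum fun k hk ↦ ?_
  rw [mul_right_comm, ← sub_one_mul]
  rcases le_or_gt (d + 1) (thetaExp s t (k - n)) with hexp | hexp
  · rw [thetaTerm, monomial_eq_C_mul_X_pow]
    exact ((pow_dvd_pow X hexp).mul_left _).mul_left _
  · have hk' := mem_range_succ_iff.1 hk
    have hm := natAbs_le_thetaExp_add_one hst (k - n)
    obtain ⟨l, hl⟩ := Nat.exists_eq_add_of_le hk'
    rw [hl]
    refine Dvd.dvd.mul_right ?_ _
    exact (pow_dvd_pow_of_dvd (dvd_pow_self X hst.ne') _).trans <|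
      pow_dvd_gaussBinom_mul_qFactorial_sub_one _ (by lia) (by lia) (by lia)
        (isUnit_qFactorial_X_pow hst n)

end TripleProductApprox

section Topology

variable {R : Type*} [CommRing R] [TopologicalSpace R]

lemma summable_monomial {ι : Type*} {e : ι → ℕ} (he : Tendsto e cofinite atTop) (c : ι → R) :
    Summable fun i ↦ monomial (e i) (c i) := by
  rw [WithPiTopology.summable_iff_summable_coeff]
  intro d
  refine summable_of_hasFiniteSupport ((he.eventually_gt_atTop d).subset fun i hi ↦ ?_)
  contrapose! hi
  simp only [Set.mem_compl_iff, Set.mem_ofPred_eq, not_not] at hi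
  rw [Function.notMem_support, coeff_monomial, if_neg hi.ne]

lemma tendsto_thetaExp_cofinite {s t : ℕ} (hst : 0 < s + t) :
    Tendsto (thetaExp s t) cofinite atTop := by
  refine tendsto_atTop.2 fun d ↦ (Set.finite_Icc (-d : ℤ) d).subset fun m hm ↦ ?_
  have := natAbs_le_thetaExp_add_one hst m
  simp only [Set.mem_compl_iff, Set.mem_ofPred_eq, Set.mem_Icc] at *
  lia

lemma summable_thetaTerm (u : Rˣ) {s t : ℕ} (hst : 0 < s + t) : Summable (thetaTerm u s t) :=
  summable_monomial (tendsto_thetaExp_cofinite hst) _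

/-- The infinite product `(c q ^ a; q ^ m)_∞`, as a power series in `q`. -/
noncomputable def qPoch (c : R) (a m : ℕ) : R⟦X⟧ :=
  ∏' i : ℕ, (1 - monomial (a + m * i) c)

/-- Ramanujan's theta function `f(u q ^ s, u⁻¹ q ^ t)`, as a power series in `q`. -/
noncomputable def theta (u : Rˣ) (s t : ℕ) : R⟦X⟧ :=
  ∑' m, thetaTerm u s t m

lemma multipliable_one_sub_monomial (c : R) (a : ℕ) {m : ℕ} (hm : 0 < m) :
    Multipliable fun i : ℕ ↦ 1 - monomial (a + m * i) c := by
  simp only [sub_eq_add_neg]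
  refine WithPiTopology.multipliable_one_add_of_tendsto_order_atTop_nhds_top R ?_
  refine ENat.tendsto_nhds_top_iff_natCast_lt.mpr fun n ↦ ?_
  filter_upwards [eventually_gt_atTop n] with i hi
  have hlt : n < a + m * i := by nlinarith
  rw [order_neg]
  exact (Nat.cast_lt.2 hlt).trans_le <|
    nat_le_order _ _ fun j hj ↦ by rw [coeff_monomial, if_neg hj.ne]

lemma tendsto_prod_one_sub_monomial (c : R) (a : ℕ) {m : ℕ} (hm : 0 < m) :
    Tendsto (fun n ↦ ∏ i ∈ range n, (1 - monomial (a + m * i) c)) atTop (𝓝 (qPoch c a m)) :=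
  (multipliable_one_sub_monomial c a hm).hasProd.tendsto_prod_nat

lemma tendsto_zero_of_X_pow_dvd {f : ℕ → R⟦X⟧}
    (h : ∀ d, ∀ᶠ n in atTop, X ^ (d + 1) ∣ f n) : Tendsto f atTop (𝓝 0) := by
  rw [WithPiTopology.tendsto_iff_coeff_tendsto]
  intro d
  refine tendsto_nhds_of_eventually_eq ((h d).mono fun n hn ↦ ?_)
  rw [X_pow_dvd_iff.1 hn d d.lt_succ_self, map_zero]

variable [IsTopologicalRing R] [T2Space R]

theorem jacobi_triple_product (u : Rˣ) {s t : ℕ} (hst : 0 < s + t) :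
    qPoch (-u : R) s (s + t) * qPoch (-↑u⁻¹ : R) t (s + t) * qPoch 1 (s + t) (s + t) =
      theta u s t := by
  have hprod := ((tendsto_prod_one_sub_monomial (-u : R) s hst).mul
    (tendsto_prod_one_sub_monomial (-↑u⁻¹ : R) t hst)).mul
    (tendsto_prod_one_sub_monomial (1 : R) (s + t) hst)
  have hsum : Tendsto (fun n : ℕ ↦ ∑ m ∈ Icc (-n : ℤ) n, thetaTerm u s t m) atTop
      (𝓝 (theta u s t)) :=
    (summable_thetaTerm u hst).hasSum.comp tendsto_Icc_neg
  rw [← sub_eq_zero]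
  refine tendsto_nhds_unique (hprod.sub hsum) (tendsto_zero_of_X_pow_dvd fun d ↦ ?_)
  filter_upwards [eventually_ge_atTop (2 * d + 1)] with n hn
  convert X_pow_dvd_prod_mul_qFactorial_sub_sum_thetaTerm u hst hn using 3
  · simp
  · refine prod_congr rfl fun i _ ↦ ?_
    rw [← X_pow_eq, ← pow_mul]
    ring

end Topology

section Expand

variable {R : Type*} [CommRing R] [TopologicalSpace R]

lemma continuous_expand {k : ℕ} (hk : k ≠ 0) : Continuous (expand k hk : R⟦X⟧ → R⟦X⟧) := by
  refine continuous_iff_continuousAt.2 fun f ↦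
    (WithPiTopology.tendsto_iff_coeff_tendsto R _ _ _).2 fun d ↦ ?_
  simp only [coeff_expand]
  split_ifs
  · exact (WithPiTopology.continuous_coeff R _).continuousAt
  · exact tendsto_const_nhds

variable [T2Space R]

lemma expand_qPoch {k : ℕ} (hk : k ≠ 0) (c : R) (a : ℕ) {m : ℕ} (hm : 0 < m) :
    expand k hk (qPoch c a m) = qPoch c (k * a) (k * m) := by
  rw [qPoch, (multipliable_one_sub_monomial c a hm).map_tprod (expand k hk) (continuous_expand hk)]
  refine tprod_congr fun i ↦ ?_
  rw [map_sub, map_one, expand_monomial, mul_add, mul_assoc]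

lemma expand_theta {k : ℕ} (hk : k ≠ 0) (u : Rˣ) {s t : ℕ} (hst : 0 < s + t) :
    expand k hk (theta u s t) = theta u (k * s) (k * t) := by
  rw [theta, (summable_thetaTerm u hst).map_tsum (expand k hk) (continuous_expand hk)]
  refine tsum_congr fun m ↦ ?_
  rw [thetaTerm, thetaTerm, expand_monomial, thetaExp_mul]

end Expand

section qPoch

variable {R : Type*} [CommRing R] [TopologicalSpace R] [T2Space R]

lemma qPoch_one_one_one : qPoch (1 : R) 1 1 = pentagonalSeries R := by
  rw [← WithPiTopology.tprod_one_sub_X_pow]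
  refine tprod_congr fun i ↦ ?_
  rw [X_pow_eq, one_mul, add_comm]

lemma isUnit_qPoch (c : R) {a m : ℕ} (ha : 0 < a) (hm : 0 < m) : IsUnit (qPoch c a m) := by
  have h := (multipliable_one_sub_monomial c a hm).map_tprod constantCoeff
    (WithPiTopology.continuous_constantCoeff R)
  rw [isUnit_iff_constantCoeff, qPoch, h]
  simp [monomial_eq_C_mul_X_pow, ha.ne']

variable [IsTopologicalRing R]

lemma qPoch_mul_qPoch_neg (c : R) (a : ℕ) {m : ℕ} (hm : 0 < m) :
    qPoch c a m * qPoch (-c) a m = qPoch (c ^ 2) (2 * a) (2 * m) := by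
  rw [qPoch, qPoch, ← (multipliable_one_sub_monomial c a hm).tprod_mul
    (multipliable_one_sub_monomial (-c) a hm)]
  refine tprod_congr fun i ↦ ?_
  have hsq : monomial (2 * a + 2 * m * i) (c ^ 2) = monomial (a + m * i) c ^ 2 := by
    rw [monomial_pow]
    congr 2
    ring
  rw [hsq, map_neg]
  ring

lemma prod_range_mul_eq_prod_prod {M : Type*} [CommMonoid M] (f : ℕ → M) (k n : ℕ) :
    ∏ i ∈ range (k * n), f i = ∏ r ∈ range k, ∏ j ∈ range n, f (r + k * j) := by
  induction n with
  | zero => simp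
  | succ n ih =>
    rw [mul_add_one, prod_range_add, ih, ← prod_mul_distrib]
    exact prod_congr rfl fun r _ ↦ by rw [prod_range_succ, add_comm (k * n)]

lemma qPoch_eq_prod_qPoch (c : R) (a : ℕ) {k m : ℕ} (hk : 0 < k) (hm : 0 < m) :
    qPoch c a m = ∏ r ∈ range k, qPoch c (a + r * m) (k * m) := by
  have hsub := (tendsto_prod_one_sub_monomial c a hm).comp (tendsto_id.const_mul_atTop' hk)
  refine tendsto_nhds_unique hsub ((tendsto_finsetProd _ fun r _ ↦
    tendsto_prod_one_sub_monomial c (a + r * m) (Nat.mul_pos hk hm)).congr fun n ↦ ?_)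
  simp only [Function.comp_apply, id_eq, prod_range_mul_eq_prod_prod]
  refine prod_congr rfl fun r _ ↦ prod_congr rfl fun j _ ↦ ?_
  congr 3
  ring

lemma qPoch_eq_qPoch_mul_qPoch (c : R) (a : ℕ) {m : ℕ} (hm : 0 < m) :
    qPoch c a m = qPoch c a (2 * m) * qPoch c (a + m) (2 * m) := by
  simp [qPoch_eq_prod_qPoch c a Nat.two_pos hm, prod_range_succ]

lemma qPoch_one_mul_qPoch_neg_one {a : ℕ} (ha : 0 < a) :
    qPoch (1 : R) a (2 * a) * qPoch (-1) a a = 1 := by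
  have hsq := qPoch_mul_qPoch_neg (1 : R) a ha
  rw [qPoch_eq_qPoch_mul_qPoch (1 : R) a ha, ← two_mul, one_pow, mul_right_comm] at hsq
  exact (isUnit_qPoch (1 : R) (by lia) (by lia)).mul_eq_right.1 hsq

end qPoch

section ResidueSection

variable {R : Type*} [CommRing R]

/-- The section `∑ aₙ q ^ n ↦ ∑ a_{m n + r} q ^ n` extracting an arithmetic progression of
coefficients. -/
noncomputable def residueSection (m r : ℕ) : R⟦X⟧ →ₗ[R] R⟦X⟧ where
  toFun f := mk fun n ↦ coeff (m * n + r) f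
  map_add' f g := by ext n; simp
  map_smul' c f := by ext n; simp

@[simp] lemma coeff_residueSection (m r n : ℕ) (f : R⟦X⟧) :
    coeff n (residueSection m r f) = coeff (m * n + r) f := by
  simp [residueSection]

lemma residueSection_mul_expand {m r : ℕ} (hm : m ≠ 0) (hr : r < m) (f g : R⟦X⟧) :
    residueSection m r (f * expand m hm g) = residueSection m r f * g := by
  ext n
  rw [coeff_residueSection, coeff_mul, coeff_mul]
  refine (sum_of_injOn (fun p ↦ (m * p.1 + r, m * p.2)) ?_ ?_ ?_ ?_).symm
  · rintro ⟨i, j⟩ - ⟨i', j'⟩ - h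
    simpa [hm] using h
  · rintro ⟨i, j⟩ hij
    simp only [mem_coe, HasAntidiagonal.mem_antidiagonal] at hij ⊢
    rw [← hij]
    ring
  · rintro ⟨i, j⟩ hij hnot
    refine mul_eq_zero_of_right _ (coeff_expand_of_not_dvd m hm _ ?_)
    rintro ⟨l, rfl⟩
    rw [HasAntidiagonal.mem_antidiagonal] at hij
    have hl : l ≤ n := by
      by_contra! hl
      have := Nat.mul_le_mul_left m hl
      lia
    obtain ⟨k, rfl⟩ := Nat.exists_eq_add_of_le hl
    exact hnot ⟨(k, l), by simp [add_comm], by simp; lia⟩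
  · rintro ⟨i, j⟩ -
    rw [coeff_residueSection, coeff_expand_mul]

lemma residueSection_expand {m r : ℕ} (hm : m ≠ 0) (hr : r < m) (hr0 : r ≠ 0) (g : R⟦X⟧) :
    residueSection m r (expand m hm g) = 0 := by
  ext n
  rw [coeff_residueSection, coeff_expand_of_not_dvd, map_zero]
  rw [Nat.dvd_add_right (dvd_mul_right m n)]
  exact Nat.not_dvd_of_pos_of_lt (Nat.pos_of_ne_zero hr0) hr

lemma residueSection_X_pow_mul_expand {m : ℕ} (hm : m ≠ 0) (r : ℕ) (g : R⟦X⟧) :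
    residueSection m r (X ^ r * expand m hm g) = g := by
  ext n
  rw [coeff_residueSection, coeff_X_pow_mul, coeff_expand_mul]

end ResidueSection

section GeneratingFunction

variable (R : Type*) [CommRing R]

/-- The generating function of the partitions into distinct parts, none of which is divisible
by `ℓ`. -/
noncomputable def regularDistinctSeries (ℓ : ℕ) : R⟦X⟧ :=
  mk fun n ↦ (#{p ∈ Nat.Partition.distincts n | ∀ i ∈ p.parts, ¬ ℓ ∣ i} : R)

/-- The generating function of `n ↦ b5' (2 * n + 1)`. -/
noncomputable def oddPart : R⟦X⟧ :=
  residueSection 2 1 (regularDistinctSeries R 5)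

lemma coeff_oddPart (n : ℕ) : coeff n (oddPart R) = (b5' (2 * n + 1) : R) := by
  rw [oddPart, coeff_residueSection, regularDistinctSeries, coeff_mk, b5']

variable [TopologicalSpace R] {ℓ : ℕ}

lemma hasProd_ite_dvd (hℓ : 0 < ℓ) :
    HasProd (fun i ↦ if ℓ ∣ i + 1 then 1 + X ^ (i + 1) else 1) (qPoch (-1 : R) ℓ ℓ) := by
  have hinj : Function.Injective fun i ↦ ℓ * i + (ℓ - 1) := by
    intro i j h
    simpa [hℓ.ne'] using h
  rw [← hinj.hasProd_iff]
  · refine (multipliable_one_sub_monomial (-1 : R) ℓ hℓ).hasProd.congr_fun fun i ↦ ?_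
    have hexp : ℓ * i + (ℓ - 1) + 1 = ℓ + ℓ * i := by lia
    simp [hexp, X_pow_eq]
  · intro i hi
    refine if_neg ?_
    rintro ⟨j, hj⟩
    cases j with
    | zero => simp at hj
    | succ j => exact hi ⟨j, by rw [mul_add_one] at hj; lia⟩

variable [T2Space R]

lemma hasProd_regularDistinctSeries (ℓ : ℕ) :
    HasProd (fun i ↦ if ℓ ∣ i + 1 then 1 else 1 + X ^ (i + 1)) (regularDistinctSeries R ℓ) := by
  convert! Nat.Partition.hasProd_genFun
    (fun i c ↦ if c < 2 ∧ ¬ ℓ ∣ i then (1 : R) else 0) using 1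
  · ext1 i
    rw [tsum_eq_single 0 fun j hj ↦ by simp [show ¬ j + 1 < 2 by lia]]
    by_cases h : ℓ ∣ i + 1 <;> simp [h]
  · simp_rw [Nat.Partition.genFun, regularDistinctSeries, ← Nat.Partition.countRestricted_two,
      Nat.Partition.countRestricted, filter_filter, card_filter, Finsupp.prod, prod_boole]
    simp [forall_and]

variable [IsTopologicalRing R]

theorem regularDistinctSeries_mul_qPoch (hℓ : 0 < ℓ) :
    regularDistinctSeries R ℓ * qPoch (-1) ℓ ℓ = qPoch (-1) 1 1 := by
  refine ((hasProd_regularDistinctSeries R ℓ).mul (hasProd_ite_dvd R hℓ)).unique ?_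
  convert hasProd_ite_dvd R one_pos using 2 with i
  by_cases h : ℓ ∣ i + 1 <;> simp [h]

theorem regularDistinctSeries_mul_qPoch_one (hℓ : 0 < ℓ) :
    regularDistinctSeries R ℓ * qPoch 1 1 2 = qPoch 1 ℓ (2 * ℓ) := by
  have hone := qPoch_one_mul_qPoch_neg_one (R := R) one_pos
  have heuler := qPoch_one_mul_qPoch_neg_one (R := R) hℓ
  calc regularDistinctSeries R ℓ * qPoch 1 1 2
      = qPoch 1 ℓ (2 * ℓ) * (regularDistinctSeries R ℓ * qPoch (-1) ℓ ℓ) * qPoch 1 1 2 := by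
        linear_combination (- regularDistinctSeries R ℓ * qPoch 1 1 2) * heuler
    _ = qPoch 1 ℓ (2 * ℓ) := by
        rw [regularDistinctSeries_mul_qPoch R hℓ]
        linear_combination qPoch 1 ℓ (2 * ℓ) * hone

end GeneratingFunction

section ThetaProduct

lemma tendsto_fst_add_snd_cofinite {ι κ : Type*} {e : ι → ℕ} {f : κ → ℕ}
    (he : Tendsto e cofinite atTop) (hf : Tendsto f cofinite atTop) :
    Tendsto (fun p : ι × κ ↦ e p.1 + f p.2) cofinite atTop := by
  refine tendsto_atTop.2 fun d ↦
    ((tendsto_atTop.1 he d).prod (tendsto_atTop.1 hf d)).subset fun p hp ↦ ?_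
  simp only [Set.mem_compl_iff, Set.mem_ofPred_eq, Set.mem_prod] at *
  lia

lemma isCompl_range_add_sub_range_neg_sub_sub :
    IsCompl (Set.range fun p : ℤ × ℤ ↦ (p.1 + p.2, p.1 - p.2))
      (Set.range fun p : ℤ × ℤ ↦ (-p.1 - p.2 - 1, p.2 - p.1)) := by
  refine ⟨Set.disjoint_left.2 ?_, codisjoint_iff_le_sup.2 ?_⟩
  · rintro _ ⟨⟨i, j⟩, rfl⟩ ⟨⟨i', j'⟩, h⟩
    simp only [Prod.mk.injEq] at h
    lia
  · rintro ⟨m, n⟩ -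
    rcases Int.even_or_odd' (m + n) with ⟨k, hk | hk⟩
    · exact .inl ⟨(k, m - k), Prod.ext (by dsimp only; lia) (by dsimp only; lia)⟩
    · exact .inr ⟨(-k - 1, k - m), Prod.ext (by dsimp only; lia) (by dsimp only; lia)⟩

variable {R : Type*} [CommRing R]

lemma thetaTerm_mul_thetaTerm_even (u v : Rˣ) (t c d : ℕ) (i j : ℤ) :
    thetaTerm u (t + c + d) t (i + j) * thetaTerm v (t + c) (t + d) (i - j) =
      thetaTerm (u * v) (2 * t + 2 * c + d) (2 * t + d) i *
        thetaTerm (u / v) (2 * t + c + 2 * d) (2 * t + c) j := by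
  have hexp : thetaExp (t + c + d) t (i + j) + thetaExp (t + c) (t + d) (i - j) =
      thetaExp (2 * t + 2 * c + d) (2 * t + d) i +
        thetaExp (2 * t + c + 2 * d) (2 * t + c) j := by
    zify
    refine mul_left_cancel₀ two_ne_zero ?_
    simp only [mul_add, two_mul_thetaExp]
    push_cast
    ring
  have hunit : u ^ (i + j) * v ^ (i - j) = (u * v) ^ i * (u / v) ^ j := by
    rw [zpow_add, zpow_sub, mul_zpow, div_zpow, div_eq_mul_inv, mul_mul_mul_comm]
  simp only [thetaTerm, monomial_mul_monomial, ← Units.val_mul, hexp, hunit]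

lemma thetaTerm_mul_thetaTerm_odd (u v : Rˣ) (t c d : ℕ) (i j : ℤ) :
    thetaTerm u (t + c + d) t (-i - j - 1) * thetaTerm v (t + c) (t + d) (j - i) =
      monomial t (↑u⁻¹ : R) * (thetaTerm (u * v)⁻¹ (4 * t + c + 2 * d) c i *
        thetaTerm (v / u) (4 * t + 2 * c + d) d j) := by
  have hexp : thetaExp (t + c + d) t (-i - j - 1) + thetaExp (t + c) (t + d) (j - i) =
      t + (thetaExp (4 * t + c + 2 * d) c i + thetaExp (4 * t + 2 * c + d) d j) := by
    zify
    refine mul_left_cancel₀ two_ne_zero ?_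
    simp only [mul_add, two_mul_thetaExp]
    push_cast
    ring
  have hunit : u ^ (-i - j - 1) * v ^ (j - i) = u⁻¹ * ((u * v)⁻¹ ^ i * (v / u) ^ j) := by
    simp only [zpow_sub, zpow_neg, mul_zpow, div_eq_mul_inv, mul_inv, zpow_one, inv_zpow,
      mul_comm, mul_left_comm, mul_assoc]
  simp only [thetaTerm, monomial_mul_monomial, ← Units.val_mul, hexp, hunit]

variable [TopologicalSpace R] [IsTopologicalRing R] [T2Space R]

lemma hasSum_thetaTerm_mul_thetaTerm (u v : Rˣ) {s t s' t' : ℕ} (hst : 0 < s + t)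
    (hst' : 0 < s' + t') :
    HasSum (fun p : ℤ × ℤ ↦ thetaTerm u s t p.1 * thetaTerm v s' t' p.2)
      (theta u s t * theta v s' t') := by
  refine (summable_thetaTerm u hst).hasSum.mul (summable_thetaTerm v hst').hasSum ?_
  simp only [thetaTerm, monomial_mul_monomial]
  exact summable_monomial (tendsto_fst_add_snd_cofinite (tendsto_thetaExp_cofinite hst)
    (tendsto_thetaExp_cofinite hst')) _

/-- Entry 29 in Chapter 16 of Ramanujan's second notebook. -/
theorem theta_mul_theta (u v : Rˣ) {t c d : ℕ} (h : 0 < 2 * t + c + d) :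
    theta u (t + c + d) t * theta v (t + c) (t + d) =
      theta (u * v) (2 * t + 2 * c + d) (2 * t + d) *
          theta (u / v) (2 * t + c + 2 * d) (2 * t + c) +
        monomial t (↑u⁻¹ : R) * (theta (u * v)⁻¹ (4 * t + c + 2 * d) c *
          theta (v / u) (4 * t + 2 * c + d) d) := by
  have heven : Function.Injective fun p : ℤ × ℤ ↦ (p.1 + p.2, p.1 - p.2) := by
    rintro ⟨i, j⟩ ⟨i', j'⟩ hp
    simp only [Prod.mk.injEq] at hp ⊢
    lia
  have hodd : Function.Injective fun p : ℤ × ℤ ↦ (-p.1 - p.2 - 1, p.2 - p.1) := by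
    rintro ⟨i, j⟩ ⟨i', j'⟩ hp
    simp only [Prod.mk.injEq] at hp ⊢
    lia
  have hprod := hasSum_thetaTerm_mul_thetaTerm u v (s := t + c + d) (t := t) (s' := t + c)
    (t' := t + d) (by lia) (by lia)
  have hsum_even : HasSum ((fun p : ℤ × ℤ ↦ thetaTerm u (t + c + d) t p.1 *
      thetaTerm v (t + c) (t + d) p.2) ∘ fun p : ℤ × ℤ ↦ (p.1 + p.2, p.1 - p.2))
      (theta (u * v) (2 * t + 2 * c + d) (2 * t + d) *
        theta (u / v) (2 * t + c + 2 * d) (2 * t + c)) := by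
    simp only [Function.comp_def, thetaTerm_mul_thetaTerm_even]
    exact hasSum_thetaTerm_mul_thetaTerm _ _ (by lia) (by lia)
  have hsum_odd : HasSum ((fun p : ℤ × ℤ ↦ thetaTerm u (t + c + d) t p.1 *
      thetaTerm v (t + c) (t + d) p.2) ∘ fun p : ℤ × ℤ ↦ (-p.1 - p.2 - 1, p.2 - p.1))
      (monomial t (↑u⁻¹ : R) * (theta (u * v)⁻¹ (4 * t + c + 2 * d) c *
          theta (v / u) (4 * t + 2 * c + d) d)) := by
    simp only [Function.comp_def, thetaTerm_mul_thetaTerm_odd]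
    refine HasSum.mul_left _ ?_
    exact hasSum_thetaTerm_mul_thetaTerm _ _ (by lia) (by lia)
  exact hprod.unique ((heven.hasSum_range_iff.2 hsum_even).add_isCompl
    isCompl_range_add_sub_range_neg_sub_sub (hodd.hasSum_range_iff.2 hsum_odd))

end ThetaProduct

section OddPart

variable {R : Type*} [CommRing R] [TopologicalSpace R] [IsTopologicalRing R] [T2Space R]

lemma theta_one_one_one_eq :
    theta (1 : Rˣ) 1 1 = qPoch (-1) 1 2 ^ 2 * qPoch 1 2 2 := by
  rw [← jacobi_triple_product _ (by lia)]
  simp [sq]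

lemma theta_neg_one_two_two_eq :
    theta (-1 : Rˣ) 2 2 = qPoch 1 2 4 * qPoch 1 2 2 := by
  rw [← jacobi_triple_product _ (by lia), qPoch_eq_qPoch_mul_qPoch (1 : R) 2 Nat.two_pos]
  simp [mul_assoc]

lemma theta_nine_one_mul_theta_seven_three_mul_qPoch :
    theta (1 : Rˣ) 9 1 * theta 1 7 3 * qPoch (-1) 5 10 = qPoch (-1) 1 2 * qPoch 1 10 10 ^ 2 := by
  have hsplit := qPoch_eq_prod_qPoch (-1 : R) 1 (k := 5) (by lia) Nat.two_pos
  simp only [prod_range_succ, prod_range_zero, one_mul, zero_mul, add_zero, Nat.reduceAdd,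
    Nat.reduceMul] at hsplit
  rw [hsplit, ← jacobi_triple_product _ (by lia), ← jacobi_triple_product _ (by lia)]
  simp only [inv_one, Units.val_one, Nat.reduceAdd]
  ring

lemma residueSection_two_theta_nine_one_mul_theta_seven_three :
    residueSection 2 1 (theta (1 : Rˣ) 9 1 * theta 1 7 3) = theta 1 9 1 * theta 1 7 3 := by
  have h := theta_mul_theta (1 : Rˣ) 1 (t := 1) (c := 6) (d := 2) (by lia)
  have heven : theta (1 : Rˣ) 16 4 * theta 1 12 8 =
      expand 2 two_ne_zero (theta 1 8 2 * theta 1 6 4) := by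
    rw [map_mul, expand_theta _ _ (by lia), expand_theta _ _ (by lia)]
  have hodd : theta (1 : Rˣ) 14 6 * theta 1 18 2 =
      expand 2 two_ne_zero (theta 1 9 1 * theta 1 7 3) := by
    rw [map_mul, expand_theta _ _ (by lia), expand_theta _ _ (by lia), mul_comm]
  simp only [mul_one, div_one, inv_one, Units.val_one, Nat.reduceAdd, Nat.reduceMul, heven, hodd,
    ← X_eq] at h
  conv_lhs => rw [h, ← pow_one X]
  rw [map_add, residueSection_expand _ (by lia) (by lia), residueSection_X_pow_mul_expand, zero_add]

variable (R)

lemma regularDistinctSeries_five_mul :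
    regularDistinctSeries R 5 * (qPoch 1 2 4 * qPoch 1 10 10 ^ 2) =
      theta 1 9 1 * theta 1 7 3 * qPoch 1 10 20 := by
  have hG := regularDistinctSeries_mul_qPoch_one R (ℓ := 5) (by lia)
  have h₁ := qPoch_mul_qPoch_neg (1 : R) 1 Nat.two_pos
  have h₅ := qPoch_mul_qPoch_neg (1 : R) 5 (m := 10) (by lia)
  have hT := theta_nine_one_mul_theta_seven_three_mul_qPoch (R := R)
  simp only [one_pow, Nat.reduceMul] at h₁ h₅ hG
  linear_combination -regularDistinctSeries R 5 * qPoch 1 10 10 ^ 2 * h₁ +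
    qPoch (-1) 1 2 * qPoch 1 10 10 ^ 2 * hG - qPoch 1 5 10 * hT + theta 1 9 1 * theta 1 7 3 * h₅

lemma oddPart_mul_qPoch_mul_sq :
    oddPart R * (qPoch 1 1 2 * qPoch 1 5 5 ^ 2) = theta 1 9 1 * theta 1 7 3 * qPoch 1 5 10 := by
  have h := congrArg (residueSection 2 1) (regularDistinctSeries_five_mul R)
  have hl : qPoch (1 : R) 2 4 * qPoch 1 10 10 ^ 2 =
      expand 2 two_ne_zero (qPoch 1 1 2 * qPoch 1 5 5 ^ 2) := by
    simp only [map_mul, map_pow, expand_qPoch _ _ _ Nat.two_pos, expand_qPoch _ _ _ Nat.succ_pos']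
  have hr : qPoch (1 : R) 10 20 = expand 2 two_ne_zero (qPoch 1 5 10) := by
    rw [expand_qPoch _ _ _ (by lia)]
  rwa [hl, hr, residueSection_mul_expand _ (by lia), residueSection_mul_expand _ (by lia),
    residueSection_two_theta_nine_one_mul_theta_seven_three] at h

lemma oddPart_mul_qPoch :
    oddPart R * qPoch 1 1 2 = qPoch (-1) 1 2 * qPoch (-1) 10 10 := by
  have h := oddPart_mul_qPoch_mul_sq R
  have hT := theta_nine_one_mul_theta_seven_three_mul_qPoch (R := R)
  have hsplit := qPoch_eq_qPoch_mul_qPoch (1 : R) 5 (m := 5) (by lia)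
  have h₅ := qPoch_mul_qPoch_neg (1 : R) 5 (m := 10) (by lia)
  have heuler := qPoch_one_mul_qPoch_neg_one (R := R) (a := 10) (by lia)
  simp only [Nat.reduceAdd, Nat.reduceMul, one_pow] at hsplit h₅ heuler
  have hunit : IsUnit (qPoch (1 : R) 5 10 * qPoch 1 10 10 ^ 2) :=
    (isUnit_qPoch _ (by lia) (by lia)).mul ((isUnit_qPoch _ (by lia) (by lia)).pow 2)
  have hcancel : oddPart R * qPoch 1 1 2 * qPoch 1 10 20 = qPoch (-1) 1 2 := by
    refine hunit.mul_right_cancel ?_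
    rw [hsplit] at h
    linear_combination qPoch (-1) 5 10 * h + qPoch 1 5 10 * hT -
      oddPart R * qPoch 1 1 2 * qPoch 1 10 10 ^ 2 * qPoch 1 5 10 * h₅
  linear_combination qPoch (-1) 10 10 * hcancel - oddPart R * qPoch 1 1 2 * heuler

theorem oddPart_mul_theta :
    oddPart R * theta (-1) 2 2 = theta 1 1 1 * qPoch (-1) 10 10 := by
  have h₁ := qPoch_mul_qPoch_neg (1 : R) 1 Nat.two_pos
  simp only [one_pow, Nat.reduceMul] at h₁
  rw [theta_neg_one_two_two_eq, theta_one_one_one_eq]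
  linear_combination qPoch (-1) 1 2 * qPoch 1 2 2 * oddPart_mul_qPoch R -
    oddPart R * qPoch 1 2 2 * h₁

end OddPart

section ModFour

lemma thetaExp_one_one (m : ℤ) : (thetaExp 1 1 m : ℤ) = m ^ 2 := by
  refine mul_left_cancel₀ two_ne_zero ?_
  rw [two_mul_thetaExp]
  push_cast
  ring

variable {R : Type*} [CommRing R]

lemma thetaTerm_one_one_neg {u : Rˣ} (hu : u⁻¹ = u) (m : ℤ) :
    thetaTerm u 1 1 (-m) = thetaTerm u 1 1 m := by
  have hexp : thetaExp 1 1 (-m) = thetaExp 1 1 m := by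
    zify
    rw [thetaExp_one_one, thetaExp_one_one, neg_sq]
  rw [thetaTerm, thetaTerm, hexp, zpow_neg, ← inv_zpow, hu]

variable [TopologicalSpace R]

/-- The sum `∑_{k ≥ 1} u ^ k q ^ (k ^ 2)`, which is half of `theta u 1 1 - 1` if `u⁻¹ = u`. -/
noncomputable def halfTheta (u : Rˣ) : R⟦X⟧ :=
  ∑' k : ℕ, thetaTerm u 1 1 (k + 1)

lemma summable_thetaTerm_one_one_succ (u : Rˣ) :
    Summable fun k : ℕ ↦ thetaTerm u 1 1 (k + 1) := by
  have hinj : Function.Injective fun k : ℕ ↦ (k + 1 : ℤ) := fun a b h ↦ by simpa using h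
  exact summable_monomial ((tendsto_thetaExp_cofinite (by lia)).comp hinj.tendsto_cofinite) _

variable [T2Space R]

lemma coeff_halfTheta_eq_zero (u : Rˣ) {n : ℕ} (hn : ¬ IsSquare n) :
    coeff n (halfTheta u) = 0 := by
  rw [halfTheta, (summable_thetaTerm_one_one_succ u).map_tsum (coeff n)
    (WithPiTopology.continuous_coeff R n)]
  refine (tsum_congr fun k ↦ ?_).trans tsum_zero
  rw [thetaTerm, coeff_monomial, if_neg]
  rintro rfl
  refine hn ⟨k + 1, ?_⟩
  zify
  rw [thetaExp_one_one, sq]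

lemma pentagonal_emod_five_ne_four (k : ℤ) : pentagonal k % 5 ≠ 4 := by
  have h := two_mul_natCast_pentagonal k
  obtain ⟨s, r, hr, hr', rfl⟩ : ∃ s r, 0 ≤ r ∧ r < 5 ∧ k = 5 * s + r :=
    ⟨k / 5, k % 5, by lia, by lia, by lia⟩
  have hexpand : (5 * s + r) * (3 * (5 * s + r) - 1) =
      75 * (s * s) + 30 * (s * r) - 5 * s + r * (3 * r - 1) := by ring
  rw [hexpand] at h
  interval_cases r <;> lia

lemma mod_five_eq_four_of_mul_self_add {r l n : ℕ} (h : r * r + 10 * l = 50 * n + 15) :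
    l % 5 = 4 := by
  obtain ⟨s, k, hk, rfl⟩ : ∃ s k, k < 10 ∧ r = 10 * s + k := ⟨r / 10, r % 10, by lia, by lia⟩
  have hsq : (10 * s + k) * (10 * s + k) = 100 * (s * s) + 20 * (s * k) + k * k := by ring
  rw [hsq] at h
  interval_cases k <;> lia

lemma coeff_halfTheta_mul_expand_pentagonalSeries (u : Rˣ) (n : ℕ) :
    coeff (50 * n + 15) (halfTheta u * expand 10 (by lia) (pentagonalSeries R)) = 0 := by
  rw [coeff_mul]
  refine sum_eq_zero fun ⟨i, j⟩ hij ↦ ?_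
  rw [HasAntidiagonal.mem_antidiagonal] at hij
  by_cases hi : IsSquare i
  swap
  · rw [coeff_halfTheta_eq_zero u hi, zero_mul]
  by_cases hj : 10 ∣ j
  swap
  · rw [coeff_expand_of_not_dvd _ _ _ hj, mul_zero]
  obtain ⟨l, rfl⟩ := hj
  rw [coeff_expand_mul, coeff_pentagonalSeries_eq_zero, mul_zero]
  rintro ⟨k, rfl⟩
  refine pentagonal_emod_five_ne_four k ?_
  obtain ⟨r, rfl⟩ := hi
  exact mod_five_eq_four_of_mul_self_add hij

variable [IsTopologicalRing R]

lemma theta_one_one_eq_one_add_two_mul_halfTheta {u : Rˣ} (hu : u⁻¹ = u) :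
    theta u 1 1 = 1 + 2 * halfTheta u := by
  have hsum := summable_thetaTerm_one_one_succ u
  have hzero : thetaTerm u 1 1 0 = 1 := by
    simp [thetaTerm, thetaExp]
  rw [theta, tsum_of_add_one_of_neg_add_one hsum (by simpa only [thetaTerm_one_one_neg hu]),
    hzero]
  simp only [thetaTerm_one_one_neg hu]
  rw [← halfTheta, two_mul, add_comm (halfTheta u) 1, add_assoc]

lemma two_mul_qPoch_neg (h4 : (4 : R⟦X⟧) = 0) (c : R) (a : ℕ) {m : ℕ} (hm : 0 < m) :
    2 * qPoch (-c) a m = 2 * qPoch c a m := by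
  refine tendsto_nhds_unique ((tendsto_prod_one_sub_monomial (-c) a hm).const_mul 2)
    (((tendsto_prod_one_sub_monomial c a hm).const_mul 2).congr fun n ↦ ?_)
  induction n with
  | zero => simp
  | succ n ih =>
    rw [prod_range_succ, prod_range_succ, map_neg]
    linear_combination (1 - monomial (a + m * n) c) * ih -
      (∏ i ∈ range n, (1 - monomial (a + m * i) (-c))) * monomial (a + m * n) c * h4

lemma oddPart_eq_of_four_eq_zero (h4 : (4 : R⟦X⟧) = 0) :
    oddPart R = expand 2 two_ne_zero (theta (-1) 1 1 * qPoch (-1) 5 5) +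
      2 * (halfTheta 1 * expand 10 (by lia) (pentagonalSeries R)) := by
  have hone := theta_one_one_eq_one_add_two_mul_halfTheta (R := R) inv_one
  have htheta : expand 2 two_ne_zero (theta (-1 : Rˣ) 1 1) =
      1 + 2 * expand 2 two_ne_zero (halfTheta (-1)) := by
    rw [theta_one_one_eq_one_add_two_mul_halfTheta (by simp), map_add, map_mul,
      map_one, map_ofNat]
  have hpent : 2 * qPoch (-1 : R) 10 10 = 2 * expand 10 (by lia) (pentagonalSeries R) := by
    rw [two_mul_qPoch_neg h4 _ _ (by lia), ← qPoch_one_one_one, expand_qPoch _ _ _ one_pos,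
      mul_one]
  have hpoch : expand 2 two_ne_zero (qPoch (-1 : R) 5 5) = qPoch (-1) 10 10 :=
    expand_qPoch _ _ _ (by lia)
  have hodd := oddPart_mul_theta R
  rw [← expand_theta two_ne_zero (-1 : Rˣ) (s := 1) (t := 1) (by lia), htheta, hone] at hodd
  rw [map_mul, htheta, hpoch]
  set A : R⟦X⟧ := halfTheta 1
  set B : R⟦X⟧ := expand 2 two_ne_zero (halfTheta (-1))
  linear_combination (1 + 2 * B) * hodd - oddPart R * (B + B ^ 2) * h4 + A * hpent +
    A * B * qPoch (-1) 10 10 * h4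

theorem coeff_oddPart_eq_zero (h4 : (4 : R) = 0) (n : ℕ) :
    coeff (50 * n + 15) (oddPart R) = 0 := by
  have h4' : (4 : R⟦X⟧) = 0 := by rw [← map_ofNat C, h4, map_zero]
  rw [oddPart_eq_of_four_eq_zero h4', map_add, coeff_expand_of_not_dvd _ _ _ (by lia), two_mul,
    map_add, coeff_halfTheta_mul_expand_pentagonalSeries, add_zero, add_zero]

end ModFour

end QSeries

theorem b5'_100n31_mod4 (n : ℕ) : b5' (100 * n + 31) ≡ 0 [MOD 4] := by
  have h := QSeries.coeff_oddPart_eq_zero (R := ZMod 4) rfl n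
  rw [QSeries.coeff_oddPart, ZMod.natCast_eq_zero_iff] at h
  rwa [Nat.modEq_zero_iff_dvd, show 100 * n + 31 = 2 * (50 * n + 15) + 1 by ring]
end

section
/- For all nonnegative integers n and α, one has b'₅(5n+1) ≡ b'₅(5^(2α+1)·n + (5^(2α+1)+1)/6) (mod 5). (Note that 5^(2α+1)+1 is divisible by 6.) -/
namespace DistinctRegular

open PowerSeries Filter Topology Finset
open scoped PowerSeries.WithPiTopology

section EulerDerivation

variable {R : Type*} [CommRing R]

/-- The Euler derivation `θ = X d/dX` on formal power series. -/
noncomputable def theta : Derivation R R⟦X⟧ R⟦X⟧ := (X : R⟦X⟧) • d⁄dX R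

@[simp]
lemma coeff_theta (n : ℕ) (F : R⟦X⟧) : coeff n (theta F) = n * coeff n F := by
  rcases n with - | n
  · simp [theta]
  · simp [theta, coeff_succ_X_mul, coeff_derivative, mul_comm]

@[simp]
lemma theta_ofNat (n : ℕ) [n.AtLeastTwo] : theta (ofNat(n) : R⟦X⟧) = 0 := by
  rw [← Nat.cast_ofNat, Derivation.map_natCast]

lemma theta_expand (m : ℕ) (hm : m ≠ 0) (F : R⟦X⟧) :
    theta (expand m hm F) = m * expand m hm (theta F) := by
  ext n
  rw [← map_natCast C m, coeff_C_mul, coeff_theta, coeff_expand, coeff_expand]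
  split_ifs with h
  · obtain ⟨k, rfl⟩ := h
    simp [Nat.pos_of_ne_zero hm, mul_assoc]
  · simp

lemma theta_mul {a b F G : R⟦X⟧} (hF : theta F = a * F) (hG : theta G = b * G) :
    theta (F * G) = (a + b) * (F * G) := by
  rw [Derivation.leibniz, hF, hG, smul_eq_mul, smul_eq_mul]
  ring

lemma theta_pow {a F : R⟦X⟧} (hF : theta F = a * F) (n : ℕ) :
    theta (F ^ n) = n * a * F ^ n := by
  rcases n with - | n
  · simp
  · rw [Derivation.leibniz_pow, hF]
    simp only [Nat.add_sub_cancel, smul_eq_mul, nsmul_eq_mul]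
    ring

lemma theta_inv {k : Type*} [Field k] {a F : k⟦X⟧} (hF : theta F = a * F) :
    theta F⁻¹ = -a * F⁻¹ := by
  by_cases h : constantCoeff F = 0
  · simp [PowerSeries.inv_eq_zero.mpr h]
  · rw [Derivation.leibniz_of_mul_eq_one _ (PowerSeries.inv_mul_cancel F h), hF, smul_eq_mul]
    linear_combination (-a * F⁻¹) * PowerSeries.inv_mul_cancel F h

end EulerDerivation

section ResiduePart

variable {R : Type*} [CommRing R]

/-- The part of `F` supported on the exponents congruent to `r` modulo `m`. -/
noncomputable def residuePart {m : ℕ} (r : ZMod m) : R⟦X⟧ →ₗ[R] R⟦X⟧ where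
  toFun F := mk fun n ↦ if (n : ZMod m) = r then coeff n F else 0
  map_add' F G := by ext n; simp [apply_ite₂]
  map_smul' a F := by ext n; simp

@[simp]
lemma coeff_residuePart {m : ℕ} (r : ZMod m) (n : ℕ) (F : R⟦X⟧) :
    coeff n (residuePart r F) = if (n : ZMod m) = r then coeff n F else 0 := by
  simp [residuePart]

lemma sum_residuePart {m : ℕ} [NeZero m] (F : R⟦X⟧) :
    ∑ r : ZMod m, residuePart r F = F := by
  ext n
  simp

lemma residuePart_mul {m : ℕ} [NeZero m] (r : ZMod m) (F G : R⟦X⟧) :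
    residuePart r (F * G) = ∑ s, residuePart s F * residuePart (r - s) G := by
  ext n
  simp only [map_sum, coeff_mul, coeff_residuePart, ite_zero_mul_ite_zero]
  rw [sum_comm]
  split_ifs with hn
  · refine sum_congr rfl fun ij hij ↦ ?_
    rw [← hn, ← mem_antidiagonal.mp hij, Nat.cast_add,
      sum_eq_single_of_mem (ij.1 : ZMod m) (mem_univ _) fun s _ hs ↦ if_neg fun h ↦ hs h.1.symm]
    simp
  · refine (sum_eq_zero fun ij hij ↦ sum_eq_zero fun s _ ↦ if_neg fun ⟨hi, hj⟩ ↦ hn ?_).symm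
    rw [← mem_antidiagonal.mp hij, Nat.cast_add, hi, hj, add_sub_cancel]

lemma residuePart_expand {m k : ℕ} (hk : k ≠ 0) (hkm : k.Coprime m) (r : ZMod m) (F : R⟦X⟧) :
    residuePart ((k : ZMod m) * r) (expand k hk F) = expand k hk (residuePart r F) := by
  have hunit : IsUnit (k : ZMod m) := (ZMod.isUnit_iff_coprime k m).mpr hkm
  ext n
  simp only [coeff_residuePart, coeff_expand]
  by_cases h : k ∣ n
  · obtain ⟨n, rfl⟩ := h
    simp [Nat.pos_of_ne_zero hk, hunit.mul_right_inj]
  · simp [h]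

end ResiduePart

section PrimeCharacteristic

variable {p : ℕ}

instance {R : Type*} [CommRing R] [CharP R p] : CharP R⟦X⟧ p :=
  charP_of_injective_ringHom C_injective p

lemma theta_residuePart (r : ZMod p) (F : (ZMod p)⟦X⟧) :
    theta (residuePart r F) = C r * residuePart r F := by
  ext n
  simp +contextual

lemma theta_theta_residuePart (r : ZMod p) (F : (ZMod p)⟦X⟧) :
    theta (theta (residuePart r F)) = C r ^ 2 * residuePart r F := by
  ext n
  rw [← map_pow, sq]
  simp +contextual [mul_assoc]

variable [Fact p.Prime]

lemma expand_prime_eq_pow (F : (ZMod p)⟦X⟧) :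
    expand p (Nat.Prime.ne_zero Fact.out) F = F ^ p := by
  have h := MvPowerSeries.map_frobenius_expand (R := ZMod p) (σ := Unit) p
    (Nat.Prime.ne_zero Fact.out) (f := F)
  rwa [ZMod.frobenius_zmod, MvPowerSeries.map_id] at h

lemma expand_prime_sq_eq_pow (F : (ZMod p)⟦X⟧) :
    expand (p ^ 2) (pow_ne_zero 2 (Nat.Prime.ne_zero Fact.out)) F = F ^ p ^ 2 := by
  have hp : p ≠ 0 := Nat.Prime.ne_zero Fact.out
  simp only [sq, expand_mul p hp p hp, expand_prime_eq_pow, pow_mul]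

lemma coeff_mul_add_eq_of_theta_sub {r : ℕ} {F G W : (ZMod p)⟦X⟧}
    (h : F = X ^ r * G ^ p + (theta W - (r : (ZMod p)⟦X⟧) * W)) (n : ℕ) :
    coeff (p * n + r) F = coeff n G := by
  rw [h, ← expand_prime_eq_pow, ← map_natCast (C (R := ZMod p)) r]
  simp [coeff_X_pow_mul', coeff_expand_mul, -map_natCast]

end PrimeCharacteristic

section DistinctParts

variable (R : Type*) [CommRing R]

/-- The generating function of the partitions into distinct parts all of which satisfy `c`. -/
noncomputable def distinctGenFun (c : ℕ → Prop) [DecidablePred c] : R⟦X⟧ :=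
  mk fun n ↦ (#{p ∈ Nat.Partition.distincts n | ∀ i ∈ p.parts, c i} : R)

lemma hasProd_distinctGenFun [TopologicalSpace R] [T2Space R] (c : ℕ → Prop) [DecidablePred c] :
    HasProd (fun i ↦ if c (i + 1) then 1 + X ^ (i + 1) else 1) (distinctGenFun R c) := by
  convert! Nat.Partition.hasProd_genFun (R := R)
    (fun i k ↦ if k < 2 ∧ c i then 1 else 0) using 1
  · ext1 i
    rw [tsum_eq_single 0 (by simp +contextual)]
    by_cases h : c (i + 1) <;> simp [h]
  · ext n
    rw [distinctGenFun, coeff_mk, Nat.Partition.coeff_genFun, ← Nat.Partition.countRestricted_two,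
      Nat.Partition.countRestricted, filter_filter, natCast_card_filter]
    refine sum_congr rfl fun p _ ↦ ?_
    simp_rw [Finsupp.prod, Finset.prod_boole]
    simp [forall₂_and]

lemma distinctGenFun_mul_not (c : ℕ → Prop) [DecidablePred c] :
    distinctGenFun R c * distinctGenFun R (fun i ↦ ¬ c i) = distinctGenFun R fun _ ↦ True := by
  let _ : TopologicalSpace R := ⊥
  have _ : DiscreteTopology R := ⟨rfl⟩
  refine ((hasProd_distinctGenFun R c).mul (hasProd_distinctGenFun R _)).unique ?_
  convert hasProd_distinctGenFun R fun _ ↦ True using 2 with i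
  split_ifs <;> simp

variable {R} in
lemma continuous_expand [TopologicalSpace R] {m : ℕ} (hm : m ≠ 0) :
    Continuous (expand m hm : R⟦X⟧ → R⟦X⟧) := by
  refine continuous_iff_continuousAt.mpr fun F ↦
    (WithPiTopology.tendsto_iff_coeff_tendsto ..).mpr fun n ↦ ?_
  simp only [coeff_expand]
  split_ifs
  · exact (WithPiTopology.continuous_coeff _ _).tendsto _
  · exact tendsto_const_nhds

lemma distinctGenFun_dvd (m : ℕ) (hm : m ≠ 0) :
    distinctGenFun R (m ∣ ·) = expand m hm (distinctGenFun R fun _ ↦ True) := by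
  let _ : TopologicalSpace R := ⊥
  have _ : DiscreteTopology R := ⟨rfl⟩
  have hindex (i : ℕ) : m * (i + 1) - 1 + 1 = m * (i + 1) :=
    Nat.sub_add_cancel (Nat.mul_pos (Nat.pos_of_ne_zero hm) i.succ_pos)
  have hinj : Function.Injective fun i ↦ m * (i + 1) - 1 := fun i j hij ↦ by
    have h : m * (i + 1) = m * (j + 1) :=
      (hindex i).symm.trans ((congrArg (· + 1) hij).trans (hindex j))
    simpa [hm] using h
  have hexpand := (hasProd_distinctGenFun R fun _ ↦ True).map (expand m hm) (continuous_expand hm)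
  refine (hasProd_distinctGenFun R (m ∣ ·)).unique ((hinj.hasProd_iff fun i hi ↦ if_neg ?_).mp ?_)
  · rintro ⟨j, hj⟩
    cases j with
    | zero => simp at hj
    | succ j => exact hi ⟨j, by simp [← hj]⟩
  · convert hexpand using 2
    ext1 i
    simp [hindex, pow_mul]

lemma distinctGenFun_not_dvd_mul_expand (m : ℕ) (hm : m ≠ 0) :
    distinctGenFun R (¬ m ∣ ·) * expand m hm (distinctGenFun R fun _ ↦ True) =
      distinctGenFun R fun _ ↦ True := by
  rw [← distinctGenFun_dvd, mul_comm, distinctGenFun_mul_not]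

lemma distinctGenFun_mul_pentagonalSeries :
    (distinctGenFun R fun _ ↦ True) * pentagonalSeries R =
      expand 2 two_ne_zero (pentagonalSeries R) := by
  let _ : TopologicalSpace R := ⊥
  have _ : DiscreteTopology R := ⟨rfl⟩
  have h := WithPiTopology.hasProd_one_sub_X_pow R
  refine ((hasProd_distinctGenFun R fun _ ↦ True).mul h).unique ?_
  convert h.map (expand 2 two_ne_zero) (continuous_expand two_ne_zero) using 2 with i
  simp only [Function.comp_apply, if_true, map_sub, map_one, map_pow, expand_X]
  ring

end DistinctParts

section Gauss

variable {R : Type*} [CommRing R]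

/-- The error term in the finite form `prod_one_add_mul_sum_eq` of Gauss's identity. -/
def gaussError (q : R) (n : ℕ) : R :=
  ∑ s ∈ range n, (-1) ^ (s + 1) * q ^ ((s + 1) * (n + 1)) *
    (∏ i ∈ Ico (s + 1) n, (1 - q ^ (i + 1))) * ∏ i ∈ range s, (1 + q ^ (i + 1))

lemma pow_dvd_gaussError (q : R) (n : ℕ) : q ^ (n + 1) ∣ gaussError q n :=
  dvd_sum fun s _ ↦ (((pow_dvd_pow q (Nat.le_mul_of_pos_left _ s.succ_pos)).mul_left _).mul_right
    _).mul_right _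

lemma gaussError_succ (q : R) (n : ℕ) :
    gaussError q (n + 1) =
      (1 + q ^ (n + 1)) * (gaussError q n - (-1) ^ n * q ^ ((n + 1) ^ 2) *
        ∏ i ∈ range n, (1 + q ^ (i + 1))) + q ^ (n + 1) * ∏ i ∈ range n, (1 - q ^ (i + 1)) := by
  let T (s : ℕ) : R := (-1) ^ s * q ^ ((n + 1) * (s + 1)) *
    (∏ i ∈ Ico s n, (1 - q ^ (i + 1))) * ∏ i ∈ range s, (1 + q ^ (i + 1))
  have htelescope : gaussError q (n + 1) - (1 + q ^ (n + 1)) * gaussError q n =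
      ∑ s ∈ range n, (T s - T (s + 1)) + (-1) ^ (n + 1) * q ^ ((n + 1) * (n + 2)) *
        ∏ i ∈ range n, (1 + q ^ (i + 1)) := by
    simp only [gaussError, sum_range_succ _ n, mul_sum, Ico_self, prod_empty]
    rw [add_sub_right_comm, ← sum_sub_distrib]
    congr 1
    · refine sum_congr rfl fun s hs ↦ ?_
      have hs := mem_range.mp hs
      simp only [T]
      rw [prod_Ico_succ_top hs, prod_eq_prod_Ico_succ_bot hs, prod_range_succ]
      ring
    · ring
  rw [sum_range_sub'] at htelescope
  simp only [T, Ico_self, prod_empty, range_zero, Nat.Ico_zero_eq_range] at htelescope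
  linear_combination htelescope

lemma prod_one_add_mul_sum_eq (q : R) (n : ℕ) :
    (∏ i ∈ range n, (1 + q ^ (i + 1))) *
        (1 + 2 * ∑ k ∈ range n, (-1) ^ (k + 1) * q ^ ((k + 1) ^ 2)) =
      ∏ i ∈ range n, (1 - q ^ (i + 1)) + 2 * gaussError q n := by
  induction n with
  | zero => simp [gaussError]
  | succ n ih =>
    rw [gaussError_succ, prod_range_succ, prod_range_succ, sum_range_succ]
    linear_combination (1 + q ^ (n + 1)) * ih

variable (R) in
/-- Gauss's theta series `∑ (-1) ^ k X ^ (k ^ 2)`, summed over all integers `k`. -/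
noncomputable def gaussTheta : R⟦X⟧ :=
  mk fun n ↦ if IsSquare n then if n = 0 then 1 else 2 * (-1) ^ n else 0

lemma coeff_sum_gaussTheta {n N : ℕ} (h : N ≤ n) :
    coeff N (1 + 2 * ∑ k ∈ range n, (-1) ^ (k + 1) * X ^ ((k + 1) ^ 2) : R⟦X⟧) =
      coeff N (gaussTheta R) := by
  have hcoeff (k : ℕ) : coeff N ((-1) ^ (k + 1) * X ^ ((k + 1) ^ 2) : R⟦X⟧) =
      if N = (k + 1) ^ 2 then (-1) ^ (k + 1) else 0 := by
    rw [← map_one C, ← map_neg, ← map_pow, coeff_C_mul, coeff_X_pow, mul_ite, mul_one, mul_zero]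
  rw [← map_ofNat C 2, map_add, coeff_C_mul, map_sum, coeff_one, gaussTheta, coeff_mk]
  simp only [hcoeff]
  by_cases hsq : IsSquare N
  · obtain ⟨_ | k, rfl⟩ := hsq
    · simp [eq_comm (a := 0)]
    · rw [sum_eq_single_of_mem k (mem_range.mpr (by nlinarith)) fun j _ hj ↦ if_neg ?_]
      · have hsign : (-1 : R) ^ ((k + 1) * (k + 1)) = (-1) ^ (k + 1) := by
          rcases Nat.even_or_odd (k + 1) with h | h <;> simp [pow_mul, h.neg_one_pow]
        simp [sq, hsign]
      · rw [← sq]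
        exact fun hjk ↦ hj (by grind [Nat.pow_left_injective two_ne_zero hjk])
  · rw [sum_eq_zero fun k _ ↦ if_neg fun hk ↦ hsq ⟨k + 1, by rw [hk, sq]⟩]
    simp [hsq, show N ≠ 0 by rintro rfl; simp at hsq]

variable (R) in
lemma distinctGenFun_mul_gaussTheta :
    (distinctGenFun R fun _ ↦ True) * gaussTheta R = pentagonalSeries R := by
  let _ : TopologicalSpace R := ⊥
  have _ : DiscreteTopology R := ⟨rfl⟩
  have hD : Tendsto (fun n ↦ ∏ i ∈ range n, (1 + X ^ (i + 1) : R⟦X⟧)) atTop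
      (𝓝 (distinctGenFun R fun _ ↦ True)) := by
    simpa using (hasProd_distinctGenFun R fun _ ↦ True).tendsto_prod_nat
  have hf := (WithPiTopology.hasProd_one_sub_X_pow R).tendsto_prod_nat
  have hθ : Tendsto (fun n ↦ (1 + 2 * ∑ k ∈ range n, (-1) ^ (k + 1) * X ^ ((k + 1) ^ 2) : R⟦X⟧))
      atTop (𝓝 (gaussTheta R)) := by
    refine (WithPiTopology.tendsto_iff_coeff_tendsto ..).mpr fun N ↦
      tendsto_nhds_of_eventually_eq ?_
    filter_upwards [eventually_ge_atTop N] with n using coeff_sum_gaussTheta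
  have herror : Tendsto (fun n ↦ 2 * gaussError (X : R⟦X⟧) n) atTop (𝓝 0) := by
    refine (WithPiTopology.tendsto_iff_coeff_tendsto ..).mpr fun N ↦
      tendsto_nhds_of_eventually_eq ?_
    filter_upwards [eventually_ge_atTop N] with n hn
    rw [map_zero]
    exact X_pow_dvd_iff.mp ((pow_dvd_gaussError X n).mul_left 2) N (Nat.lt_succ_of_le hn)
  refine tendsto_nhds_unique (hD.mul hθ) ?_
  simpa only [prod_one_add_mul_sum_eq, add_zero] using hf.add herror

variable (R) in
lemma pentagonalSeries_sq :
    pentagonalSeries R ^ 2 = expand 2 two_ne_zero (pentagonalSeries R) * gaussTheta R := by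
  rw [← distinctGenFun_mul_pentagonalSeries, mul_right_comm, distinctGenFun_mul_gaussTheta, sq]

end Gauss

section Pentagonal

lemma natCast_pentagonal_eq_one_iff {k : ℤ} :
    (pentagonal k : ZMod 5) = 1 ↔ ∃ j, k = 5 * j + 1 := by
  have h := two_mul_natCast_pentagonal k
  have hcast := congrArg (Int.cast : ℤ → ZMod 5) h
  push_cast at hcast
  have hiff : (pentagonal k : ZMod 5) = 1 ↔ (k : ZMod 5) = 1 := by
    generalize (pentagonal k : ZMod 5) = a at *
    generalize (k : ZMod 5) = b at *
    revert a b
    decide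
  rw [hiff, ← Int.cast_one, eq_comm, ZMod.intCast_eq_intCast_iff_dvd_sub]
  exact exists_congr fun j ↦ by push_cast; omega

lemma pentagonal_five_mul_add_one (j : ℤ) :
    pentagonal (5 * j + 1) = 5 ^ 2 * pentagonal (-j) + 1 := by
  have h := two_mul_natCast_pentagonal (5 * j + 1)
  have hneg := two_mul_natCast_pentagonal_neg j
  zify
  linarith

lemma negOnePow_five_mul_add_one (j : ℤ) :
    (5 * j + 1).negOnePow = -(-j).negOnePow := by
  rw [Int.negOnePow_neg, Int.negOnePow_succ, show 5 * j = j + 2 * (2 * j) by ring,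
    Int.negOnePow_add, Int.negOnePow_two_mul, mul_one]

end Pentagonal

section Residues

variable (R : Type*) [CommRing R]

lemma residuePart_gaussTheta_eq_zero {m : ℕ} {r : ZMod m} (hr : ¬ IsSquare r) :
    residuePart r (gaussTheta R) = 0 := by
  ext n
  rw [coeff_residuePart, gaussTheta, coeff_mk, map_zero]
  split_ifs with hn hsq <;> try rfl
  all_goals exact absurd (hn ▸ hsq.map (Nat.castRingHom (ZMod m))) hr

lemma residuePart_zero_gaussTheta {p : ℕ} [Fact p.Prime] (hp : Odd p) :
    residuePart (0 : ZMod p) (gaussTheta R) =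
      expand (p ^ 2) (pow_ne_zero 2 (Nat.Prime.ne_zero Fact.out)) (gaussTheta R) := by
  have hprime : p.Prime := Fact.out
  ext n
  simp only [coeff_residuePart, coeff_expand, ZMod.natCast_eq_zero_iff, gaussTheta, coeff_mk]
  by_cases hdvd : p ^ 2 ∣ n
  · obtain ⟨k, rfl⟩ := hdvd
    have hsquare : IsSquare (p ^ 2 * k) ↔ IsSquare k := by
      refine ⟨fun ⟨a, ha⟩ ↦ ?_, (IsSquare.sq p).mul⟩
      obtain ⟨b, rfl⟩ : p ∣ a := hprime.dvd_of_dvd_pow (n := 2) ⟨p * k, by rw [sq, ← ha]; ring⟩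
      exact ⟨b, Nat.eq_of_mul_eq_mul_left (pow_pos hprime.pos 2) (by rw [ha]; ring)⟩
    rw [if_pos ((dvd_pow_self p two_ne_zero).mul_right k), if_pos (dvd_mul_right _ _),
      Nat.mul_div_cancel_left _ (pow_pos hprime.pos 2)]
    simp [hsquare, hprime.ne_zero, pow_mul, (hp.pow : Odd (p ^ 2)).neg_one_pow]
  · rw [if_neg hdvd]
    split_ifs with hn hsq <;> try rfl
    all_goals
      obtain ⟨a, rfl⟩ := hsq
      exact absurd (sq a ▸ pow_dvd_pow_of_dvd (hprime.dvd_of_dvd_pow (n := 2) (sq a ▸ hn)) 2) hdvd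

-- `24 * pentagonal k + 1 = (6 * k - 1) ^ 2`
lemma residuePart_pentagonalSeries_eq_zero {m : ℕ} {r : ZMod m} (hr : ¬ IsSquare (24 * r + 1)) :
    residuePart r (pentagonalSeries R) = 0 := by
  ext n
  rw [coeff_residuePart, map_zero]
  split_ifs with hn
  · refine coeff_pentagonalSeries_eq_zero R fun ⟨k, hk⟩ ↦ hr ⟨6 * k - 1, ?_⟩
    have h := congrArg (Int.cast : ℤ → ZMod m) (two_mul_natCast_pentagonal k)
    push_cast at h
    rw [← hn, ← hk]
    linear_combination 12 * h
  · rfl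

lemma residuePart_one_pentagonalSeries :
    residuePart (1 : ZMod 5) (pentagonalSeries R) =
      -(X * expand (5 ^ 2) (by norm_num) (pentagonalSeries R)) := by
  ext n
  rw [coeff_residuePart, map_neg]
  by_cases hn : ∃ j, n = pentagonal (5 * j + 1)
  · obtain ⟨j, rfl⟩ := hn
    rw [if_pos (natCast_pentagonal_eq_one_iff.mpr ⟨j, rfl⟩), coeff_pentagonalSeries_pentagonal,
      pentagonal_five_mul_add_one, coeff_succ_X_mul, coeff_expand_mul,
      coeff_pentagonalSeries_pentagonal, negOnePow_five_mul_add_one]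
    simp
  · have hleft : (if (n : ZMod 5) = 1 then coeff n (pentagonalSeries R) else 0) = 0 := by
      rw [ite_eq_right_iff]
      refine fun h ↦ coeff_pentagonalSeries_eq_zero R ?_
      rintro ⟨k, rfl⟩
      obtain ⟨j, rfl⟩ := natCast_pentagonal_eq_one_iff.mp h
      exact hn ⟨j, rfl⟩
    have hright : coeff n (X * expand (5 ^ 2) (by norm_num) (pentagonalSeries R)) = 0 := by
      rcases n with - | n
      · simp
      rw [coeff_succ_X_mul, coeff_expand, ite_eq_right_iff]
      rintro ⟨m, rfl⟩
      rw [Nat.mul_div_cancel_left _ (by norm_num)]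
      refine coeff_pentagonalSeries_eq_zero R ?_
      rintro ⟨k, rfl⟩
      exact hn ⟨-k, by rw [pentagonal_five_mul_add_one, neg_neg]⟩
    rw [hleft, hright, neg_zero]

end Residues

section ModFive

instance : Fact (Nat.Prime 5) := ⟨Nat.prime_five⟩

/-- Euler's product `∏ (1 - q ^ n)` modulo `5`. -/
noncomputable abbrev f₁ : (ZMod 5)⟦X⟧ := pentagonalSeries (ZMod 5)

/-- Euler's product modulo `5`, at `q ^ 2`. -/
noncomputable abbrev f₂ : (ZMod 5)⟦X⟧ := expand 2 two_ne_zero f₁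

/-- Gauss's theta series modulo `5`. -/
noncomputable abbrev φ : (ZMod 5)⟦X⟧ := gaussTheta (ZMod 5)

/-- The Eisenstein series `E₂ = 1 - 24 ∑ σ(n) q ^ n` modulo `5`, encoded through the logarithmic
derivative of Euler's product. -/
noncomputable def e₁ : (ZMod 5)⟦X⟧ := 1 - theta f₁ * f₁⁻¹

/-- The Eisenstein series `E₂` modulo `5`, at `q ^ 2`. -/
noncomputable def e₂ : (ZMod 5)⟦X⟧ := expand 2 two_ne_zero e₁

/-- The Eisenstein series `2 E₂(q ^ 2) - E₂(q)` of weight `2` and level `2`, modulo `5`. -/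
noncomputable def δ : (ZMod 5)⟦X⟧ := 2 * e₂ - e₁

lemma f₁_sq : f₁ ^ 2 = f₂ * φ := pentagonalSeries_sq (ZMod 5)

lemma constantCoeff_f₁ : constantCoeff f₁ = 1 := by
  rw [← coeff_zero_eq_constantCoeff_apply]
  exact (coeff_pentagonalSeries_pentagonal (ZMod 5) 0).trans (by simp)

lemma constantCoeff_f₂ : constantCoeff f₂ = 1 := by
  rw [f₂, constantCoeff_expand, constantCoeff_f₁]

lemma constantCoeff_φ : constantCoeff φ = 1 := by
  simp [φ, gaussTheta]

lemma constantCoeff_e₁ : constantCoeff e₁ = 1 := by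
  simp [e₁, theta]

lemma constantCoeff_δ : constantCoeff δ = 1 := by
  rw [δ, map_sub, map_mul, e₂, constantCoeff_expand, constantCoeff_e₁, map_ofNat]
  norm_num

lemma f₁_ne_zero : f₁ ≠ 0 := fun h ↦ by simpa [h] using constantCoeff_f₁

lemma f₂_ne_zero : f₂ ≠ 0 := fun h ↦ by simpa [h] using constantCoeff_f₂

lemma φ_ne_zero : φ ≠ 0 := fun h ↦ by simpa [h] using constantCoeff_φ

lemma f₁_inv_mul : f₁⁻¹ * f₁ = 1 :=
  PowerSeries.inv_mul_cancel _ (by simp [constantCoeff_f₁])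

lemma f₂_inv_mul : f₂⁻¹ * f₂ = 1 :=
  PowerSeries.inv_mul_cancel _ (by rw [constantCoeff_f₂]; exact one_ne_zero)

lemma sum_zmod_five (g : ZMod 5 → (ZMod 5)⟦X⟧) :
    ∑ r, g r = g 0 + g 1 + g 2 + g 3 + g 4 :=
  Fin.sum_univ_five g

lemma residuePart_one_f₁ : residuePart (1 : ZMod 5) f₁ = -(X * f₁ ^ 25) := by
  rw [residuePart_one_pentagonalSeries, expand_prime_sq_eq_pow]
  norm_num

lemma residuePart_three_f₁ : residuePart (3 : ZMod 5) f₁ = 0 :=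
  residuePart_pentagonalSeries_eq_zero _ (by decide)

lemma residuePart_four_f₁ : residuePart (4 : ZMod 5) f₁ = 0 :=
  residuePart_pentagonalSeries_eq_zero _ (by decide)

lemma residuePart_zero_φ : residuePart (0 : ZMod 5) φ = φ ^ 25 := by
  rw [residuePart_zero_gaussTheta _ (by decide), expand_prime_sq_eq_pow]
  norm_num

lemma residuePart_two_φ : residuePart (2 : ZMod 5) φ = 0 :=
  residuePart_gaussTheta_eq_zero _ (by decide)

lemma residuePart_three_φ : residuePart (3 : ZMod 5) φ = 0 :=
  residuePart_gaussTheta_eq_zero _ (by decide)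

lemma f₁_eq_add_residueParts :
    f₁ = residuePart (0 : ZMod 5) f₁ - X * f₁ ^ 25 + residuePart (2 : ZMod 5) f₁ := by
  have h : ∑ r : ZMod 5, residuePart r f₁ = f₁ := sum_residuePart f₁
  rw [sum_zmod_five, residuePart_one_f₁, residuePart_three_f₁, residuePart_four_f₁] at h
  linear_combination -h

lemma φ_eq_add_residueParts :
    φ = φ ^ 25 + residuePart (1 : ZMod 5) φ + residuePart (4 : ZMod 5) φ := by
  have h : ∑ r : ZMod 5, residuePart r φ = φ := sum_residuePart φ
  rw [sum_zmod_five, residuePart_zero_φ, residuePart_two_φ, residuePart_three_φ] at h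
  linear_combination -h

lemma residuePart_two_f₁_sq :
    residuePart (2 : ZMod 5) (f₁ ^ 2) =
      (X * f₁ ^ 25) ^ 2 + 2 * (residuePart (0 : ZMod 5) f₁ * residuePart (2 : ZMod 5) f₁) := by
  rw [sq f₁, residuePart_mul, sum_zmod_five, residuePart_three_f₁, residuePart_four_f₁,
    show (2 - 0 : ZMod 5) = 2 by decide, show (2 - 1 : ZMod 5) = 1 by decide,
    show (2 - 2 : ZMod 5) = 0 by decide, residuePart_one_f₁]
  ring

lemma residuePart_mul_two_f₂ (r : ZMod 5) :
    residuePart (2 * r) f₂ = expand 2 two_ne_zero (residuePart r f₁) :=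
  residuePart_expand two_ne_zero (by norm_num) r f₁

lemma residuePart_two_f₂_mul_φ :
    residuePart (2 : ZMod 5) (f₂ * φ) = -(X * f₁ ^ 25) ^ 2 := by
  have h₁ : residuePart (1 : ZMod 5) f₂ = 0 := by
    rw [show (1 : ZMod 5) = 2 * 3 by decide, residuePart_mul_two_f₂, residuePart_three_f₁, map_zero]
  have h₂ : residuePart (2 : ZMod 5) f₂ = -(X ^ 2 * f₂ ^ 25) := by
    rw [show (2 : ZMod 5) = 2 * 1 by decide, residuePart_mul_two_f₂, residuePart_one_f₁]
    simp [f₂]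
  have h₃ : residuePart (3 : ZMod 5) f₂ = 0 := by
    rw [show (3 : ZMod 5) = 2 * 4 by decide, residuePart_mul_two_f₂, residuePart_four_f₁, map_zero]
  rw [residuePart_mul, sum_zmod_five, h₁, h₂, h₃, show (2 - 0 : ZMod 5) = 2 by decide,
    show (2 - 2 : ZMod 5) = 0 by decide, show (2 - 4 : ZMod 5) = 3 by decide,
    residuePart_zero_φ, residuePart_two_φ, residuePart_three_φ]
  have h := congrArg (X ^ 2 * · ^ 25) f₁_sq
  simp only [mul_pow] at h
  linear_combination h

-- Comparing the class `2` of `f₁ ^ 2 = f₂ φ` is a relation between the two residue parts of `f₁`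
-- that are not known explicitly; it becomes the Riccati equation `theta_e₁`.
lemma residuePart_zero_mul_residuePart_two_f₁ :
    residuePart (0 : ZMod 5) f₁ * residuePart (2 : ZMod 5) f₁ = -(X * f₁ ^ 25) ^ 2 := by
  have h := residuePart_two_f₁_sq
  rw [f₁_sq, residuePart_two_f₂_mul_φ] at h
  linear_combination (norm := grind) 2 * h

lemma theta_f₁ : theta f₁ = (1 - e₁) * f₁ := by
  rw [e₁]
  linear_combination -(theta f₁) * f₁_inv_mul

lemma theta_f₂ : theta f₂ = 2 * (1 - e₂) * f₂ := by
  rw [f₂, theta_expand, theta_f₁, e₂, map_mul, map_sub, map_one, Nat.cast_two]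
  ring

lemma theta_φ : theta φ = (δ - e₁) * φ := by
  have h : theta (f₁ ^ 2) = theta (f₂ * φ) := congrArg theta f₁_sq
  rw [theta_pow theta_f₁, Derivation.leibniz, theta_f₂, smul_eq_mul, smul_eq_mul, Nat.cast_two] at h
  apply mul_left_cancel₀ f₂_ne_zero
  rw [δ]
  linear_combination 2 * (1 - e₁) * f₁_sq - h

lemma theta_f₁_eq_residuePart :
    theta f₁ = -(X * f₁ ^ 25) + 2 * residuePart (2 : ZMod 5) f₁ := by
  conv_lhs => rw [f₁_eq_add_residueParts]
  rw [sub_eq_add_neg, ← residuePart_one_f₁]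
  simp only [map_add, theta_residuePart, map_zero, map_one, map_ofNat]
  ring

lemma theta_theta_f₁ :
    theta (theta f₁) = -(X * f₁ ^ 25) + 4 * residuePart (2 : ZMod 5) f₁ := by
  conv_lhs => rw [f₁_eq_add_residueParts]
  rw [sub_eq_add_neg, ← residuePart_one_f₁]
  simp only [map_add, theta_theta_residuePart, map_zero, map_one, map_ofNat]
  ring

lemma theta_theta_φ : theta (theta φ) = φ - φ ^ 25 := by
  have h : theta (theta φ) = residuePart (1 : ZMod 5) φ + 4 ^ 2 * residuePart (4 : ZMod 5) φ := by
    conv_lhs => rw [φ_eq_add_residueParts, ← residuePart_zero_φ]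
    simp only [map_add, theta_theta_residuePart, map_zero, map_one, map_ofNat]
    ring
  linear_combination (norm := grind) h - φ_eq_add_residueParts

lemma residuePart_two_f₁ : residuePart (2 : ZMod 5) f₁ = 3 * (1 + X * f₁ ^ 24 - e₁) * f₁ := by
  linear_combination (norm := grind) 3 * theta_f₁ - 3 * theta_f₁_eq_residuePart

lemma residuePart_zero_f₁ : residuePart (0 : ZMod 5) f₁ = 3 * (1 + X * f₁ ^ 24 + e₁) * f₁ := by
  linear_combination (norm := grind) -f₁_eq_add_residueParts - residuePart_two_f₁

lemma X_mul_f₁_pow_eq : X * f₁ ^ 24 = 2 - 2 * e₁ ^ 2 := by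
  have h := residuePart_zero_mul_residuePart_two_f₁
  rw [residuePart_zero_f₁, residuePart_two_f₁] at h
  apply mul_left_cancel₀ (pow_ne_zero 2 f₁_ne_zero)
  linear_combination (norm := grind) 3 * h

lemma X_sq_mul_f₂_pow_eq : X ^ 2 * f₂ ^ 24 = 2 - 2 * e₂ ^ 2 := by
  simpa [f₂, e₂, map_ofNat] using congrArg (expand 2 two_ne_zero) X_mul_f₁_pow_eq

lemma theta_e₁ : theta e₁ = 2 - 2 * e₁ ^ 2 := by
  have h := theta_theta_f₁
  rw [theta_f₁, Derivation.leibniz, residuePart_two_f₁, map_sub, Derivation.map_one_eq_zero,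
    smul_eq_mul, smul_eq_mul, theta_f₁] at h
  apply mul_left_cancel₀ f₁_ne_zero
  linear_combination (norm := grind) -h - f₁ * X_mul_f₁_pow_eq

lemma theta_e₂ : theta e₂ = 2 * (2 - 2 * e₂ ^ 2) := by
  simp [e₂, theta_expand, theta_e₁, map_ofNat]

lemma theta_δ_eq : theta δ = 4 * (2 - 2 * e₂ ^ 2) - (2 - 2 * e₁ ^ 2) := by
  rw [δ, map_sub, Derivation.leibniz, theta_ofNat, theta_e₁, theta_e₂, smul_eq_mul, smul_zero]
  ring

lemma φ_pow_eq : φ ^ 24 = 1 - theta (δ - e₁) - (δ - e₁) ^ 2 := by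
  have h : theta ((δ - e₁) * φ) = φ - φ ^ 25 := by rw [← theta_φ, theta_theta_φ]
  rw [Derivation.leibniz, theta_φ, smul_eq_mul, smul_eq_mul] at h
  apply mul_left_cancel₀ φ_ne_zero
  linear_combination h

lemma e₂_eq_add : e₂ = 3 * (δ + e₁) := by
  rw [δ]
  grind

lemma e₁_eq : e₁ = 2 * δ - δ ^ 3 := by
  have h : φ ^ 24 * (X ^ 2 * f₂ ^ 24) = (X * f₁ ^ 24) ^ 2 := by
    have h := congrArg (X ^ 2 * · ^ 24) f₁_sq
    simp only [mul_pow] at h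
    linear_combination -h
  rw [φ_pow_eq, map_sub, theta_δ_eq, theta_e₁, X_sq_mul_f₂_pow_eq, X_mul_f₁_pow_eq,
    e₂_eq_add] at h
  have hprod : (δ ^ 3 + e₁ - 2 * δ) * (δ + 3 * e₁) = 0 := by
    linear_combination (norm := grind) h
  have hne : δ + 3 * e₁ ≠ 0 := fun h0 ↦ by
    have h4 : (1 + 3 : ZMod 5) = 0 := by
      simpa [constantCoeff_δ, constantCoeff_e₁, map_ofNat] using congrArg constantCoeff h0
    exact absurd h4 (by decide)
  linear_combination (mul_eq_zero.mp hprod).resolve_right hne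

lemma e₂_eq : e₂ = 2 * δ ^ 3 - δ := by
  rw [e₂_eq_add, e₁_eq]
  grind

lemma theta_δ : theta δ = 1 - δ ^ 4 := by
  rw [theta_δ_eq, e₂_eq, e₁_eq]
  grind

lemma X_mul_f₁_pow : X * f₁ ^ 24 = 3 * (1 - δ ^ 2) * (3 * (1 + δ ^ 2)) ^ 2 := by
  rw [X_mul_f₁_pow_eq, e₁_eq]
  grind

lemma φ_pow : φ ^ 24 = (3 * (1 + δ ^ 2)) ^ 3 := by
  rw [φ_pow_eq, map_sub, theta_δ, theta_e₁, e₁_eq]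
  grind

lemma eq_of_pow_three_eq {F G : (ZMod 5)⟦X⟧} (hF : constantCoeff F = 1)
    (hG : constantCoeff G = 1) (h : F ^ 3 = G ^ 3) : F = G := by
  have hprod : (F - G) * (F ^ 2 + F * G + G ^ 2) = 0 := by linear_combination h
  refine sub_eq_zero.mp ((mul_eq_zero.mp hprod).resolve_right fun h0 ↦ ?_)
  have h3 : (1 + 1 + 1 : ZMod 5) = 0 := by simpa [hF, hG] using congrArg constantCoeff h0
  exact absurd h3 (by decide)

lemma f₁_pow_sixteen : f₁ ^ 16 = 3 * (1 + δ ^ 2) * f₂ ^ 8 := by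
  have h : φ ^ 8 = 3 * (1 + δ ^ 2) := by
    refine eq_of_pow_three_eq (by simp [constantCoeff_φ]) ?_ (by rw [← pow_mul, φ_pow])
    rw [map_mul, map_add, map_pow, constantCoeff_δ, map_one, map_ofNat]
    decide
  rw [← h, ← mul_pow, mul_comm, ← f₁_sq, ← pow_mul]

lemma X_mul_f₂_pow_sixteen : X * f₂ ^ 16 = 3 * (1 - δ ^ 2) * f₁ ^ 8 := by
  apply mul_left_cancel₀ (pow_ne_zero 24 f₁_ne_zero)
  linear_combination f₂ ^ 16 * X_mul_f₁_pow -
    3 * (1 - δ ^ 2) * (f₁ ^ 16 + 3 * (1 + δ ^ 2) * f₂ ^ 8) * f₁_pow_sixteen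

end ModFive

section Dissections

/-- The generating function of `b5'` modulo `5`. -/
noncomputable def B : (ZMod 5)⟦X⟧ := distinctGenFun (ZMod 5) (¬ 5 ∣ ·)

/-- The quotient `f₁ ^ 12 / f₂ ^ 4`, which is the series `∑ b5' (5 n + 1) q ^ n` modulo `5`. -/
noncomputable def G : (ZMod 5)⟦X⟧ := f₁ ^ 12 * f₂⁻¹ ^ 4

/-- The quotient `f₂ ^ 12 / f₁ ^ 4`, which is the series `∑ b5' (25 n + 21) q ^ n` modulo `5`. -/
noncomputable def H : (ZMod 5)⟦X⟧ := f₂ ^ 12 * f₁⁻¹ ^ 4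

lemma coeff_B (n : ℕ) : coeff n B = b5' n := by
  rw [B, distinctGenFun, coeff_mk, b5']

lemma B_mul_f₂_pow : B * f₂ ^ 4 = f₁ ^ 4 := by
  let D : (ZMod 5)⟦X⟧ := distinctGenFun (ZMod 5) fun _ ↦ True
  have hB : B * D ^ 5 = D := by
    rw [← expand_prime_eq_pow]
    exact distinctGenFun_not_dvd_mul_expand (ZMod 5) 5 _
  have hD : D * f₁ = f₂ := distinctGenFun_mul_pentagonalSeries (ZMod 5)
  have hD0 : D ≠ 0 := left_ne_zero_of_mul (hD ▸ f₂_ne_zero)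
  apply mul_left_cancel₀ hD0
  rw [← hD]
  linear_combination f₁ ^ 4 * hB

lemma G_mul_f₂_pow : G * f₂ ^ 4 = f₁ ^ 12 := by
  rw [G, mul_assoc, ← mul_pow, f₂_inv_mul, one_pow, mul_one]

lemma H_mul_f₁_pow : H * f₁ ^ 4 = f₂ ^ 12 := by
  rw [H, mul_assoc, ← mul_pow, f₁_inv_mul, one_pow, mul_one]

lemma B_eq : B = f₁ ^ 4 * f₂⁻¹ ^ 4 := by
  rw [← B_mul_f₂_pow, mul_assoc, ← mul_pow, mul_comm f₂, f₂_inv_mul, one_pow, mul_one]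

lemma theta_B : theta B = (1 - δ) * B := by
  rw [B_eq, theta_mul (theta_pow theta_f₁ 4) (theta_pow (theta_inv theta_f₂) 4), δ]
  grind

lemma theta_G : theta G = (-1 + 3 * δ - 2 * δ ^ 3) * G := by
  rw [G, theta_mul (theta_pow theta_f₁ 12) (theta_pow (theta_inv theta_f₂) 4), e₁_eq, e₂_eq]
  grind

lemma theta_H : theta H = 2 * (δ - δ ^ 3) * H := by
  rw [H, theta_mul (theta_pow theta_f₂ 12) (theta_pow (theta_inv theta_f₁) 4), e₁_eq, e₂_eq]
  grind

lemma X_mul_G_pow_five : X * G ^ 5 = 3 * (1 - δ ^ 2) * (3 * (1 + δ ^ 2)) ^ 4 * B := by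
  apply mul_right_cancel₀ (pow_ne_zero 36 f₂_ne_zero)
  calc X * G ^ 5 * f₂ ^ 36 = X * f₂ ^ 16 * (G * f₂ ^ 4) ^ 5 := by ring
    _ = 3 * (1 - δ ^ 2) * f₁ ^ 8 * (f₁ ^ 12) ^ 5 := by rw [X_mul_f₂_pow_sixteen, G_mul_f₂_pow]
    _ = 3 * (1 - δ ^ 2) * (f₁ ^ 16) ^ 4 * f₁ ^ 4 := by ring
    _ = 3 * (1 - δ ^ 2) * (3 * (1 + δ ^ 2) * f₂ ^ 8) ^ 4 * (B * f₂ ^ 4) := by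
      rw [f₁_pow_sixteen, B_mul_f₂_pow]
    _ = 3 * (1 - δ ^ 2) * (3 * (1 + δ ^ 2)) ^ 4 * B * f₂ ^ 36 := by ring

lemma X_pow_four_mul_H_pow_five : X ^ 4 * H ^ 5 = (3 * (1 - δ ^ 2)) ^ 4 * G := by
  apply mul_right_cancel₀ (mul_ne_zero (pow_ne_zero 20 f₁_ne_zero) (pow_ne_zero 4 f₂_ne_zero))
  calc X ^ 4 * H ^ 5 * (f₁ ^ 20 * f₂ ^ 4) = X ^ 4 * (H * f₁ ^ 4) ^ 5 * f₂ ^ 4 := by ring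
    _ = (X * f₂ ^ 16) ^ 4 := by rw [H_mul_f₁_pow]; ring
    _ = (3 * (1 - δ ^ 2)) ^ 4 * f₁ ^ 12 * f₁ ^ 20 := by rw [X_mul_f₂_pow_sixteen]; ring
    _ = (3 * (1 - δ ^ 2)) ^ 4 * G * (f₁ ^ 20 * f₂ ^ 4) := by rw [← G_mul_f₂_pow]; ring

lemma G_pow_five : G ^ 5 = (3 * (1 + δ ^ 2)) ^ 4 * H := by
  apply mul_right_cancel₀ (mul_ne_zero (pow_ne_zero 4 f₁_ne_zero) (pow_ne_zero 20 f₂_ne_zero))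
  calc G ^ 5 * (f₁ ^ 4 * f₂ ^ 20) = (G * f₂ ^ 4) ^ 5 * f₁ ^ 4 := by ring
    _ = (f₁ ^ 16) ^ 4 := by rw [G_mul_f₂_pow]; ring
    _ = (3 * (1 + δ ^ 2)) ^ 4 * f₂ ^ 12 * f₂ ^ 20 := by rw [f₁_pow_sixteen]; ring
    _ = (3 * (1 + δ ^ 2)) ^ 4 * H * (f₁ ^ 4 * f₂ ^ 20) := by rw [← H_mul_f₁_pow]; ring

-- As `θ` maps `P(δ) B` to a polynomial in `δ` times `B`, and likewise for `G` and `H`, each witness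
-- `W` below is found by solving linear equations for the coefficients of `P`.
lemma coeff_five_mul_add_one_B (n : ℕ) : coeff (5 * n + 1) B = coeff n G := by
  refine coeff_mul_add_eq_of_theta_sub (W := (3 * δ + 3 * δ ^ 3 + 2 * δ ^ 5 + δ ^ 7) * B) ?_ n
  rw [pow_one, X_mul_G_pow_five]
  simp only [Derivation.leibniz, Derivation.leibniz_pow, theta_B, theta_δ, theta_ofNat, map_add,
    smul_eq_mul, nsmul_eq_mul, mul_zero, add_zero, Nat.add_one_sub_one, Nat.cast_ofNat,
    Nat.cast_one, one_mul]
  grind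

lemma coeff_five_mul_add_four_G (n : ℕ) : coeff (5 * n + 4) G = coeff n H := by
  refine coeff_mul_add_eq_of_theta_sub (W := 3 * δ ^ 3 * (1 + δ ^ 2) * G) ?_ n
  rw [X_pow_four_mul_H_pow_five]
  simp only [Derivation.leibniz, Derivation.leibniz_pow, Derivation.map_one_eq_zero, theta_G,
    theta_δ, theta_ofNat, map_add, smul_eq_mul, nsmul_eq_mul, mul_zero, add_zero, zero_add,
    pow_one, Nat.add_one_sub_one, Nat.cast_ofNat]
  grind

lemma coeff_five_mul_H (n : ℕ) : coeff (5 * n) H = coeff n G := by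
  refine coeff_mul_add_eq_of_theta_sub (r := 0) (W := 2 * δ ^ 3 * (1 - δ ^ 2) * H) ?_ n
  rw [G_pow_five]
  simp only [Derivation.leibniz, Derivation.leibniz_pow, Derivation.map_one_eq_zero, theta_H,
    theta_δ, theta_ofNat, map_sub, smul_eq_mul, nsmul_eq_mul, mul_zero, zero_mul, add_zero,
    zero_sub, sub_zero, mul_neg, one_mul, pow_zero, pow_one, Nat.add_one_sub_one, Nat.cast_ofNat,
    Nat.cast_zero]
  grind

lemma coeff_twentyFive_mul_add_four_G (n : ℕ) : coeff (25 * n + 4) G = coeff n G := by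
  rw [show 25 * n = 5 * (5 * n) by ring, coeff_five_mul_add_four_G, coeff_five_mul_H]

lemma coeff_twentyFive_pow_mul_add_G (n α : ℕ) :
    coeff (25 ^ α * n + 4 * ∑ i ∈ range α, 25 ^ i) G = coeff n G := by
  induction α with
  | zero => simp
  | succ α ih =>
    rw [geom_sum_succ, ← ih, ← coeff_twentyFive_mul_add_four_G (25 ^ α * n + _)]
    congr 2
    ring

end Dissections

lemma five_pow_mul_add_div_six (n α : ℕ) :
    5 ^ (2 * α + 1) * n + (5 ^ (2 * α + 1) + 1) / 6 =
      5 * (25 ^ α * n + 4 * ∑ i ∈ range α, 25 ^ i) + 1 := by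
  have hpow : 5 ^ (2 * α + 1) = 5 * 25 ^ α := by rw [pow_succ', pow_mul]; norm_num
  have hgeom : (∑ i ∈ range α, 25 ^ i) * 24 + 1 = 25 ^ α := geom_sum_mul_add 24 α
  rw [hpow, mul_assoc]
  omega

end DistinctRegular

theorem b5'_internal_cong (n α : ℕ) :
    b5' (5 * n + 1) ≡ b5' (5 ^ (2 * α + 1) * n + (5 ^ (2 * α + 1) + 1) / 6) [MOD 5] := by
  open DistinctRegular in
  rw [five_pow_mul_add_div_six, ← ZMod.natCast_eq_natCast_iff, ← coeff_B, ← coeff_B,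
    coeff_five_mul_add_one_B, coeff_five_mul_add_one_B, coeff_twentyFive_pow_mul_add_G]
end
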